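/- arXiv:2206.05043 — 2 statements merged into one kernel-verified Lean document; each statement's English description precedes it below -/
import Mathlib

section
/- There exists a constant C > 0 such that the following holds. For each n ≥ 2, let a : Fin n → Fin n be a uniformly random function (the values a(i) chosen independently and uniformly from Fin n), and let b, c be independent uniformly random permutations of Fin n, with a, b, c mutually independent. Consider the deterministic automaton on state set Fin n with three letters acting by a, b, c. Then the probability that this automaton is synchronizing and admits a synchronizing word of length at most C · √(n · (log n)^3) tends to 1 as n → ∞. -/
/-- The action of a word (a list of letters, each acting as a function on the
state set), applied in order: the first letter of the list acts first. -/
def wordAction {Q : Type*} (w : List (Q → Q)) (q : Q) : Q :=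
  w.foldl (fun s f => f s) q

/-- A word is synchronizing if its action sends every state to one common state. -/
def IsSyncWord {Q : Type*} (w : List (Q → Q)) : Prop :=
  ∃ S : Q, ∀ T : Q, wordAction w T = S

namespace RA
open Finset

abbrev Om (n : ℕ) := Bool → Equiv.Perm (Fin n)

theorem reveal_step {n : ℕ} (m : ℕ) (s : ℕ → Bool) (Z : Om n → ℕ → Fin n)
    (A : Om n → ℕ → Finset (Fin n))
    (hZ : ∀ σ τ t, (∀ j < t, Z σ j = Z τ j ∧ σ (s j) (Z σ j) = τ (s j) (Z τ j)) → Z σ t = Z τ t)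
    (hA : ∀ σ τ t, (∀ j < t, Z σ j = Z τ j ∧ σ (s j) (Z σ j) = τ (s j) (Z τ j)) → A σ t = A τ t)
    (P : Om n → Prop) [DecidablePred P] (t : ℕ) (hm : ∀ σ, (A σ t).card ≤ m)
    (hP : ∀ σ τ, (∀ j < t, Z σ j = Z τ j ∧ σ (s j) (Z σ j) = τ (s j) (Z τ j)) → P σ → P τ) :
    (univ.filter (fun σ : Om n => P σ ∧ (∀ j < t, (s j, Z σ j) ≠ (s t, Z σ t)) ∧
        σ (s t) (Z σ t) ∈ A σ t)).card * (n - t)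
      ≤ m * (univ.filter (fun σ : Om n => P σ)).card := by
  classical
  set F := univ.filter (fun σ : Om n => P σ ∧ (∀ j < t, (s j, Z σ j) ≠ (s t, Z σ t)) ∧
        σ (s t) (Z σ t) ∈ A σ t) with hF
  set F' := univ.filter (fun σ : Om n => P σ) with hF'
  let B : Om n → Finset (Fin n) := fun σ => univ \ (range t).image (fun j => σ (s j) (Z σ j))
  let g : Om n → Fin n → Om n := fun σ y =>
    Function.update σ (s t) ((σ (s t)).trans (Equiv.swap (σ (s t) (Z σ t)) y))
  have h1 : F.card * (n - t) ≤ (F.sigma B).card := by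
    rw [card_sigma, ← smul_eq_mul, ← sum_const]
    apply sum_le_sum
    intro σ _
    simp only [B]
    have h := le_card_sdiff ((range t).image (fun j => σ (s j) (Z σ j))) (univ : Finset (Fin n))
    have h2 : ((range t).image (fun j => σ (s j) (Z σ j))).card ≤ t := by
      simpa using card_image_le (s := range t) (f := fun j => σ (s j) (Z σ j))
    rw [card_univ, Fintype.card_fin] at h
    omega
  have h2 : (F'.sigma (fun τ => A τ t)).card ≤ m * F'.card := by
    rw [card_sigma, mul_comm, ← smul_eq_mul, ← sum_const]
    exact sum_le_sum fun σ _ => hm σ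
  have key : ∀ σ ∈ F, ∀ y ∈ B σ, ∀ k ≤ t, ∀ j < k,
      Z σ j = Z (g σ y) j ∧ σ (s j) (Z σ j) = (g σ y) (s j) (Z (g σ y) j) := by
    intro σ hσ y hy k
    rw [hF, mem_filter] at hσ
    obtain ⟨-, -, hfr, -⟩ := hσ
    simp only [B, mem_sdiff, mem_univ, true_and, mem_image, mem_range, not_exists, not_and] at hy
    induction k with
    | zero => intro _ j hj; omega
    | succ k ih =>
      intro hk j hj
      have ih' := ih (by omega)
      rcases Nat.lt_succ_iff_lt_or_eq.1 hj with h | h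
      · exact ih' j h
      · subst h
        have e := hZ σ (g σ y) j ih'
        refine ⟨e, ?_⟩
        rw [← e]
        by_cases hs : s j = s t
        · simp only [g]
          rw [hs, Function.update_self, Equiv.trans_apply, Equiv.swap_apply_of_ne_of_ne]
          · intro h
            exact hfr j (by omega) (by rw [hs, (σ (s t)).injective h])
          · rw [← hs]; exact hy j (by omega)
        · simp only [g]
          rw [Function.update_of_ne hs]
  refine h1.trans (le_trans ?_ h2)
  refine card_le_card_of_injOn (fun p => ⟨g p.1 p.2, p.1 (s t) (Z p.1 t)⟩) ?_ ?_
  · rintro ⟨σ, y⟩ hp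
    simp only [coe_sigma, Set.mem_sigma_iff, mem_coe] at hp ⊢
    have k1 := key σ hp.1 y hp.2 t le_rfl
    have hσ := hp.1
    rw [hF, mem_filter] at hσ
    refine ⟨?_, ?_⟩
    · rw [hF', mem_filter]
      exact ⟨mem_univ _, hP σ _ k1 hσ.2.1⟩
    · rw [← hA σ _ t k1]; exact hσ.2.2.2
  · rintro ⟨σ, y⟩ hp ⟨σ', y'⟩ hp' heq
    simp only [coe_sigma, Set.mem_sigma_iff, mem_coe] at hp hp'
    simp only [Sigma.mk.injEq, heq_eq_eq] at heq
    obtain ⟨e1, e2⟩ := heq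
    have z1 := hZ σ _ t (key σ hp.1 y hp.2 t le_rfl)
    have z2 := hZ σ' _ t (key σ' hp'.1 y' hp'.2 t le_rfl)
    have zz : Z σ t = Z σ' t := by rw [z1, z2, e1]
    have a1 : g σ y (s t) (Z σ t) = y := by simp [g]
    have a2 : g σ' y' (s t) (Z σ' t) = y' := by simp [g]
    have hy : y = y' := by rw [← a1, ← a2, e1, zz]
    subst hy
    have : σ = σ' := by
      funext r
      have e3 := congrFun e1 r
      simp only [g] at e3
      rw [e2] at e3
      by_cases hr : r = s t
      · subst hr
        rw [Function.update_self, Function.update_self] at e3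
        ext x
        have := congrArg (fun p : Equiv.Perm (Fin n) => p x) e3
        simp only [Equiv.trans_apply] at this
        rw [(Equiv.swap _ _).injective this]
      · rwa [Function.update_of_ne hr, Function.update_of_ne hr] at e3
    subst this
    rfl

theorem reveal_arith {x y z m a b p q c : ℕ} (h1 : x ≤ y) (h2 : y * b ≤ m * z) (h3 : a ≤ b)
    (h4 : z * p ≤ q * c) : x * (p * a) ≤ q * m * c := by
  calc x * (p * a) ≤ y * (p * b) := by gcongr
    _ = (y * b) * p := by ring
    _ ≤ (m * z) * p := by gcongr
    _ = m * (z * p) := by ring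
    _ ≤ m * (q * c) := by gcongr
    _ = q * m * c := by ring

theorem reveal {n : ℕ} (T m : ℕ) (s : ℕ → Bool) (Z : Om n → ℕ → Fin n)
    (A : Om n → ℕ → Finset (Fin n))
    (hZ : ∀ σ τ t, (∀ j < t, Z σ j = Z τ j ∧ σ (s j) (Z σ j) = τ (s j) (Z τ j)) → Z σ t = Z τ t)
    (hA : ∀ σ τ t, (∀ j < t, Z σ j = Z τ j ∧ σ (s j) (Z σ j) = τ (s j) (Z τ j)) → A σ t = A τ t)
    (hm : ∀ σ, ∀ t < T, (A σ t).card ≤ m) (I : Finset ℕ) (hI : ∀ t ∈ I, t < T) :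
    (univ.filter (fun σ : Om n => ∀ t ∈ I, (∀ j < t, (s j, Z σ j) ≠ (s t, Z σ t)) ∧
        σ (s t) (Z σ t) ∈ A σ t)).card * (n - T) ^ I.card
      ≤ m ^ I.card * Fintype.card (Om n) := by
  induction I using Finset.induction_on_max with
  | empty => simp
  | insert t I hlt ih =>
    have ih := ih fun t ht => hI t (mem_insert_of_mem ht)
    have hn : t ∉ I := fun h => lt_irrefl _ (hlt t h)
    rw [card_insert_of_notMem hn, pow_succ, pow_succ]
    have st := reveal_step m s Z A hZ hA (fun σ => ∀ t ∈ I,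
        (∀ j < t, (s j, Z σ j) ≠ (s t, Z σ t)) ∧ σ (s t) (Z σ t) ∈ A σ t) t (fun σ => hm σ t (hI t (mem_insert_self _ _))) (by
      intro σ τ h hP t' ht'
      have lt := hlt t' ht'
      obtain ⟨p1, p2⟩ := hP t' ht'
      rw [← (h t' lt).1, ← hA σ τ t' (fun j hj => h j (hj.trans lt))]
      refine ⟨fun j hj => ?_, ?_⟩
      · rw [← (h j (hj.trans lt)).1]; exact p1 j hj
      · have := (h t' lt).2
        rw [← (h t' lt).1] at this
        rw [← this]; exact p2)
    have hTt : n - T ≤ n - t := by have := hI t (mem_insert_self _ _); omega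
    refine reveal_arith ?_ st hTt ih
    apply card_le_card
    intro σ hσ
    rw [mem_filter] at hσ ⊢
    exact ⟨hσ.1, fun t' h' => hσ.2 t' (mem_insert_of_mem h'), hσ.2 t (mem_insert_self _ _)⟩
end RA

namespace RA
open Finset

def walk {n : ℕ} (σ : Om n) (u : ℕ → Bool) (x : Fin n) : ℕ → Fin n
  | 0 => x
  | j + 1 => σ (u j) (walk σ u x j)

theorem two_le_card_filter {α β : Type*} [DecidableEq α] [DecidableEq β] (S : Finset (α × β)) (z : β) (a b : α)
    (hab : a ≠ b) (ha : (a, z) ∈ S) (hb : (b, z) ∈ S) : 2 ≤ (S.filter (fun e => e.2 = z)).card := by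
  have : ({(a, z), (b, z)} : Finset (α × β)) ⊆ S.filter (fun e => e.2 = z) := by
    intro e he
    simp only [mem_insert, mem_singleton] at he
    rcases he with rfl | rfl <;> simp [ha, hb]
  have h2 := card_le_card this
  rwa [card_pair (by simpa using hab)] at h2

theorem one_le_card_filter {α β : Type*} [DecidableEq α] [DecidableEq β] (S : Finset (α × β)) (z : β) (a : α)
    (ha : (a, z) ∈ S) : 1 ≤ (S.filter (fun e => e.2 = z)).card :=
  card_pos.2 ⟨(a, z), by simp [ha]⟩

theorem comb {n : ℕ} (σ : Om n) (wd : ℕ → ℕ → Bool) (st : ℕ → Fin n) (pr : ℕ → ℕ) (l : ℕ)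
    (hl : 0 < l)
    (hpr : ∀ r < 4, pr r < 4)
    (hst : ∀ r < 4, st (pr r) = st r)
    (h0 : ∀ r < 4, wd (pr r) 0 ≠ wd r 0)
    (h1 : ∀ r < 4, wd (pr r) (l - 1) ≠ wd r (l - 1))
    (hcl : ∀ r < 4, walk σ (wd (pr r)) (st (pr r)) l = walk σ (wd r) (st r) l)
    (hinj : ∀ r < 4, ∀ r' < 4, st r = st r' → r' = r ∨ r' = pr r)
    (hst2 : 2 ≤ ((range 4).image st).card)
    (s : ℕ → Bool) (Z : ℕ → Fin n)
    (hs : ∀ r < 4, ∀ j, s (4 * j + r) = wd r j)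
    (hZ : ∀ r < 4, ∀ j, Z (4 * j + r) = walk σ (wd r) (st r) j)
    (hk : ((range (4 * l)).filter (fun t => (∀ j < t, (s j, Z j) ≠ (s t, Z t)) ∧
      σ (s t) (Z t) ∈ (range 4).image st ∪ (range t).image (fun j => σ (s j) (Z j)))).card ≤ 2) :
    ∀ t < 4 * l, ∀ j < t, (s j, Z j) ≠ (s t, Z t) := by
  classical
  set T := 4 * l with hT
  set ans : ℕ → Fin n := fun j => σ (s j) (Z j) with hans
  set V := (range 4).image st ∪ (range T).image ans with hV
  set F := (range T).filter (fun t => (∀ j < t, (s j, Z j) ≠ (s t, Z t))) with hF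
  set K := (range T).filter (fun t => (∀ j < t, (s j, Z j) ≠ (s t, Z t)) ∧
      ans t ∈ (range 4).image st ∪ (range t).image ans) with hK
  set Out : Finset (Bool × Fin n) := (range T).image (fun t => (s t, Z t)) with hOut
  set In : Finset (Bool × Fin n) := Out.image (fun e => (e.1, σ e.1 e.2)) with hIn
  have c1 : Out.card ≤ F.card := by
    have : Out ⊆ F.image (fun t => (s t, Z t)) := by
      intro e he
      rw [hOut, mem_image] at he
      have hex : ∃ t, t < T ∧ (s t, Z t) = e := by
        obtain ⟨t, ht, h⟩ := he
        exact ⟨t, mem_range.1 ht, h⟩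
      have hsp := Nat.find_spec hex
      rw [mem_image]
      refine ⟨Nat.find hex, ?_, hsp.2⟩
      rw [hF, mem_filter, mem_range]
      refine ⟨hsp.1, fun j hj h => Nat.find_min hex hj ⟨hj.trans hsp.1, h.trans hsp.2⟩⟩
    exact (card_le_card this).trans card_image_le
  have c2 : F.card ≤ V.card := by
    have hKF : K ⊆ F := by
      intro t ht
      rw [hK, mem_filter] at ht
      rw [hF, mem_filter]; exact ⟨ht.1, ht.2.1⟩
    have e1 : (F \ K).card + K.card = F.card := card_sdiff_add_card_eq_card hKF
    have nc : ∀ t ∈ F \ K, t < T ∧ ans t ∉ (range 4).image st ∪ (range t).image ans := by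
      intro t ht
      rw [mem_sdiff, hF, hK, mem_filter, mem_filter, mem_range] at ht
      exact ⟨ht.1.1, fun h => ht.2 ⟨ht.1.1, ht.1.2, h⟩⟩
    have e2 : ((F \ K).image ans).card = (F \ K).card := by
      apply card_image_of_injOn
      have aux : ∀ t ∈ F \ K, ∀ t' ∈ F \ K, t < t' → ans t ≠ ans t' := by
        intro t _ t' h' hlt h
        exact (nc t' h').2 (mem_union_right _ (mem_image.2 ⟨t, mem_range.2 hlt, h⟩))
      intro t ht t' ht' h
      rcases lt_trichotomy t t' with hlt | heq | hlt
      · exact absurd h (aux t ht t' ht' hlt)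
      · exact heq
      · exact absurd h.symm (aux t' ht' t ht hlt)
    have e3 : ((range 4).image st ∪ (F \ K).image ans).card =
        ((range 4).image st).card + ((F \ K).image ans).card := by
      apply card_union_of_disjoint
      rw [disjoint_right]
      intro z hz hz'
      obtain ⟨t, ht, rfl⟩ := mem_image.1 hz
      exact (nc t ht).2 (mem_union_left _ hz')
    have e4 : ((range 4).image st ∪ (F \ K).image ans) ⊆ V := by
      rw [hV]
      apply union_subset_union_right
      apply image_subset_image
      intro t ht
      exact mem_range.2 (nc t ht).1
    have e5 := card_le_card e4
    omega
  have oOut : ∀ r < 4, ∀ j < l, (wd r j, walk σ (wd r) (st r) j) ∈ Out := by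
    intro r hr j hj
    rw [hOut, mem_image]
    exact ⟨4 * j + r, mem_range.2 (by omega), by rw [hs r hr, hZ r hr]⟩
  have oIn : ∀ r < 4, ∀ j < l, (wd r j, walk σ (wd r) (st r) (j + 1)) ∈ In := by
    intro r hr j hj
    rw [hIn, mem_image]
    exact ⟨_, oOut r hr j hj, rfl⟩
  have hVm : ∀ r < 4, ∀ j ≤ l, walk σ (wd r) (st r) j ∈ V := by
    intro r hr j hj
    rw [hV]
    cases j with
    | zero => exact mem_union_left _ (mem_image.2 ⟨r, mem_range.2 hr, rfl⟩)
    | succ j =>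
      refine mem_union_right _ (mem_image.2 ⟨4 * j + r, mem_range.2 (by omega), ?_⟩)
      simp only [hans]
      rw [hs r hr, hZ r hr]; rfl
  have hVe : ∀ z ∈ V, ∃ r < 4, ∃ j ≤ l, walk σ (wd r) (st r) j = z := by
    intro z hz
    rw [hV, mem_union, mem_image, mem_image] at hz
    rcases hz with ⟨r, hr, rfl⟩ | ⟨t, ht, rfl⟩
    · exact ⟨r, mem_range.1 hr, 0, by omega, rfl⟩
    · rw [mem_range] at ht
      have hr : t % 4 < 4 := Nat.mod_lt _ (by norm_num)
      refine ⟨t % 4, hr, t / 4 + 1, by omega, ?_⟩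
      have e : 4 * (t / 4) + t % 4 = t := Nat.div_add_mod t 4
      simp only [hans, walk]
      rw [← hs _ hr, ← hZ _ hr, e]
  have dge : ∀ z ∈ V, 2 ≤ (Out.filter (fun e => e.2 = z)).card + (In.filter (fun e => e.2 = z)).card := by
    intro z hz
    obtain ⟨r, hr, j, hj, rfl⟩ := hVe z hz
    rcases Nat.eq_zero_or_pos j with rfl | hj0
    · have a1 := oOut r hr 0 hl
      have a2 := oOut (pr r) (hpr r hr) 0 hl
      have := two_le_card_filter Out (walk σ (wd r) (st r) 0) _ _ (h0 r hr)
        (by simpa [walk, hst r hr] using a2) a1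
      omega
    · rcases Nat.lt_or_ge j l with hjl | hjl
      · have a1 := one_le_card_filter _ _ _ (oOut r hr j hjl)
        have a2 := oIn r hr (j - 1) (by omega)
        rw [Nat.sub_add_cancel hj0] at a2
        have a3 := one_le_card_filter _ _ _ a2
        omega
      · have e : j = l := by omega
        subst e
        have a1 := oIn r hr (j - 1) (by omega)
        have a2 := oIn (pr r) (hpr r hr) (j - 1) (by omega)
        rw [Nat.sub_add_cancel hj0] at a1 a2
        rw [hcl r hr] at a2
        have := two_le_card_filter In _ _ _ (h1 r hr) a2 a1
        omega
  have dle : ∀ z ∈ V, (Out.filter (fun e => e.2 = z)).card + (In.filter (fun e => e.2 = z)).card ≤ 2 := by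
    intro z hz
    by_contra hgt
    have lt : ∑ _z ∈ V, 2 < ∑ z ∈ V, ((Out.filter (fun e => e.2 = z)).card + (In.filter (fun e => e.2 = z)).card) :=
      sum_lt_sum dge ⟨z, hz, by omega⟩
    have b1 : ∀ S : Finset (Bool × Fin n), ∑ z ∈ V, (S.filter (fun e => e.2 = z)).card ≤ S.card := by
      intro S
      rw [← card_biUnion]
      · apply card_le_card
        intro e he
        rw [mem_biUnion] at he
        obtain ⟨_, _, h⟩ := he
        exact (mem_filter.1 h).1
      · intro a _ b _ hab
        simp only [Function.onFun]
        rw [disjoint_left]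
        intro e h h'
        exact hab ((mem_filter.1 h).2.symm.trans (mem_filter.1 h').2)
    rw [sum_add_distrib] at lt
    have b2 := b1 Out
    have b3 := b1 In
    have b4 : In.card ≤ Out.card := card_image_le
    simp only [sum_const, smul_eq_mul] at lt
    omega
  have noIn : ∀ r < 4, ∀ c, (c, st r) ∉ In := by
    intro r hr c hc
    have a1 := oOut r hr 0 hl
    have a2 := oOut (pr r) (hpr r hr) 0 hl
    have := two_le_card_filter Out (st r) _ _ (h0 r hr) (by simpa [walk, hst r hr] using a2) a1
    have a3 := one_le_card_filter _ _ _ hc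
    have := dle (st r) (hVm r hr 0 (by omega))
    omega
  have uniq : ∀ j < l, ∀ r < 4, ∀ j' < l, ∀ r' < 4, wd r j = wd r' j' →
      walk σ (wd r) (st r) j = walk σ (wd r') (st r') j' → r = r' ∧ j = j' := by
    intro j
    induction j with
    | zero =>
      intro _ r hr j' hj' r' hr' hw hW
      cases j' with
      | zero =>
        rcases hinj r hr r' hr' hW with h | h
        · exact ⟨h.symm, rfl⟩
        · subst h; exact absurd hw.symm (h0 r hr)
      | succ j' =>
        have := oIn r' hr' j' (by omega)
        rw [← hW] at this
        exact absurd this (noIn r hr _)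
    | succ j ih =>
      intro hj r hr j' hj' r' hr' hw hW
      cases j' with
      | zero =>
        have := oIn r hr j (by omega)
        rw [hW] at this
        exact absurd this (noIn r' hr' _)
      | succ j' =>
        have i1 := oIn r hr j (by omega)
        have i2 := oIn r' hr' j' (by omega)
        rw [← hW] at i2
        have o1 := one_le_card_filter _ _ _ (oOut r hr (j+1) hj)
        have hd := dle _ (hVm r hr (j+1) hj.le)
        have e : wd r j = wd r' j' := by
          by_contra hne
          have := two_le_card_filter _ _ _ _ hne i1 i2
          omega
        have e2 : walk σ (wd r) (st r) j = walk σ (wd r') (st r') j' := by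
          simp only [walk] at hW
          rw [← e] at hW
          exact (σ _).injective hW
        obtain ⟨q1, q2⟩ := ih (by omega) r hr j' (by omega) r' hr' e e2
        exact ⟨q1, by omega⟩
  intro t ht j hj h
  have hr : t % 4 < 4 := Nat.mod_lt _ (by norm_num)
  have hr' : j % 4 < 4 := Nat.mod_lt _ (by norm_num)
  have e : 4 * (t / 4) + t % 4 = t := Nat.div_add_mod t 4
  have e' : 4 * (j / 4) + j % 4 = j := Nat.div_add_mod j 4
  rw [Prod.mk.injEq] at h
  have := uniq (t / 4) (by omega) (t % 4) hr (j / 4) (by omega) (j % 4) hr'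
    (by rw [← hs _ hr, ← hs _ hr', e, e', h.1]) (by rw [← hZ _ hr, ← hZ _ hr', e, e', h.2])
  omega
end RA

namespace RA
open Finset

theorem fixed_pair {n : ℕ} (u v : ℕ → Bool) (x y : Fin n) (hxy : x ≠ y) (l : ℕ) (hl : 0 < l)
    (h0 : u 0 ≠ v 0) (h1 : u (l - 1) ≠ v (l - 1)) :
    ∃ p q : ℕ, (univ.filter (fun σ : Om n => walk σ u x l = walk σ v x l ∧
        walk σ u y l = walk σ v y l)).card ≤ p + q ∧
      p * (n - 4 * l) ^ 2 ≤ Fintype.card (Om n) ∧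
      q * (n - 4 * l) ^ 3 ≤ (4 * l) ^ 3 * (4 * l + 4) ^ 3 * Fintype.card (Om n) := by
  set wd : ℕ → ℕ → Bool := fun r j => if r % 2 = 0 then u j else v j with hwd
  set st : ℕ → Fin n := fun r => if r < 2 then x else y with hst
  set pr : ℕ → ℕ := fun r => if r % 2 = 0 then r + 1 else r - 1 with hpr
  set s : ℕ → Bool := fun t => wd (t % 4) (t / 4) with hs
  set Z : Om n → ℕ → Fin n := fun σ t => walk σ (wd (t % 4)) (st (t % 4)) (t / 4) with hZd
  have hs' : ∀ r < 4, ∀ j, s (4 * j + r) = wd r j := by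
    intro r hr j
    have a1 : (4 * j + r) % 4 = r := by omega
    have a2 : (4 * j + r) / 4 = j := by omega
    simp only [hs, a1, a2]
  have hZ' : ∀ σ, ∀ r < 4, ∀ j, Z σ (4 * j + r) = walk σ (wd r) (st r) j := by
    intro σ r hr j
    have a1 : (4 * j + r) % 4 = r := by omega
    have a2 : (4 * j + r) / 4 = j := by omega
    simp only [hZd, a1, a2]
  have hZ : ∀ σ τ t, (∀ j < t, Z σ j = Z τ j ∧ σ (s j) (Z σ j) = τ (s j) (Z τ j)) →
      Z σ t = Z τ t := by
    intro σ τ t h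
    obtain ⟨r, j, hr, rfl⟩ : ∃ r j, r < 4 ∧ t = 4 * j + r :=
      ⟨t % 4, t / 4, Nat.mod_lt _ (by norm_num), by omega⟩
    rw [hZ' σ r hr, hZ' τ r hr]
    cases j with
    | zero => rfl
    | succ j =>
      have := (h (4 * j + r) (by omega)).2
      rw [hs' r hr, hZ' σ r hr, hZ' τ r hr] at this
      exact this
  let A3 : Om n → ℕ → Finset (Fin n) := fun σ t =>
    (range 4).image st ∪ (range t).image (fun j => σ (s j) (Z σ j))
  let A2 : Om n → ℕ → Finset (Fin n) := fun σ t =>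
    if t = 0 then ∅ else {σ (s (t - 1)) (Z σ (t - 1))}
  have hA3 : ∀ σ τ t, (∀ j < t, Z σ j = Z τ j ∧ σ (s j) (Z σ j) = τ (s j) (Z τ j)) →
      A3 σ t = A3 τ t := by
    intro σ τ t h
    simp only [A3]
    congr 1
    apply image_congr
    intro j hj
    exact (h j (by simpa using hj)).2
  have hA2 : ∀ σ τ t, (∀ j < t, Z σ j = Z τ j ∧ σ (s j) (Z σ j) = τ (s j) (Z τ j)) →
      A2 σ t = A2 τ t := by
    intro σ τ t h
    simp only [A2]
    split_ifs with ht
    · rfl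
    · rw [(h (t - 1) (by omega)).2]
  set E : (Om n → ℕ → Finset (Fin n)) → Finset ℕ → Finset (Om n) := fun A I =>
    univ.filter (fun σ : Om n => ∀ t ∈ I, (∀ j < t, (s j, Z σ j) ≠ (s t, Z σ t)) ∧
        σ (s t) (Z σ t) ∈ A σ t) with hE
  set I2 : Finset ℕ := {4 * (l - 1) + 1, 4 * (l - 1) + 3} with hI2
  have hI2c : I2.card = 2 := by rw [hI2, card_pair (by omega)]
  have r2 := reveal (4 * l) 1 s Z A2 hZ hA2 (by
    intro σ t _
    simp only [A2]
    split_ifs <;> simp) I2 (by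
    intro t ht
    rw [hI2, mem_insert, mem_singleton] at ht
    omega)
  have r3 : ∀ I ∈ powersetCard 3 (range (4 * l)), (E A3 I).card * (n - 4 * l) ^ 3 ≤
      (4 * l + 4) ^ 3 * Fintype.card (Om n) := by
    intro I hI
    rw [mem_powersetCard] at hI
    have := reveal (4 * l) (4 * l + 4) s Z A3 hZ hA3 (by
      intro σ t ht
      simp only [A3]
      refine (card_union_le _ _).trans ?_
      have a1 := card_image_le (s := range 4) (f := st)
      have a2 := card_image_le (s := range t) (f := (fun j => σ (s j) (Z σ j)))
      rw [card_range] at a1 a2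
      omega) I (fun t ht => mem_range.1 (hI.1 ht))
    rw [hI.2] at this
    exact this
  refine ⟨(E A2 I2).card, ∑ I ∈ powersetCard 3 (range (4 * l)), (E A3 I).card, ?_, ?_, ?_⟩
  · have hsub : (univ.filter (fun σ : Om n => walk σ u x l = walk σ v x l ∧
        walk σ u y l = walk σ v y l)) ⊆
        E A2 I2 ∪ (powersetCard 3 (range (4 * l))).biUnion (fun I => E A3 I) := by
      intro σ hσ
      rw [mem_filter] at hσ
      obtain ⟨-, hx, hy⟩ := hσ
      rw [mem_union]
      set K := (range (4 * l)).filter (fun t => (∀ j < t, (s j, Z σ j) ≠ (s t, Z σ t)) ∧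
        σ (s t) (Z σ t) ∈ (range 4).image st ∪ (range t).image (fun j => σ (s j) (Z σ j))) with hK
      by_cases hk : K.card ≤ 2
      · left
        have hc := comb σ wd st pr l hl
          (by intro r hr; interval_cases r <;> simp [hpr])
          (by intro r hr; interval_cases r <;> simp [hpr, hst])
          (by intro r hr; interval_cases r <;> simp [hpr, hwd, h0, h0.symm])
          (by intro r hr; interval_cases r <;> simp [hpr, hwd, h1, h1.symm])
          (by intro r hr; interval_cases r <;> simp [hpr, hwd, hst, hx, hy])
          (by intro r hr r' hr'; interval_cases r <;> interval_cases r' <;>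
                simp [hpr, hst, hxy, hxy.symm])
          (by
            have : ({x, y} : Finset (Fin n)) ⊆ (range 4).image st := by
              intro z hz
              rw [mem_insert, mem_singleton] at hz
              rw [mem_image]
              rcases hz with rfl | rfl
              · exact ⟨0, by simp, by simp [hst]⟩
              · exact ⟨2, by simp, by simp [hst]⟩
            have h2 := card_le_card this
            rwa [card_pair hxy] at h2)
          s (Z σ) hs' (hZ' σ) hk
        rw [hE, mem_filter]
        refine ⟨mem_univ _, fun t ht => ⟨hc t ?_, ?_⟩⟩
        · rw [hI2, mem_insert, mem_singleton] at ht
          omega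
        · rw [hI2, mem_insert, mem_singleton] at ht
          have hans : ∀ r < 4, σ (s (4 * (l - 1) + r)) (Z σ (4 * (l - 1) + r)) =
              walk σ (wd r) (st r) l := by
            intro r hr
            rw [hs' r hr, hZ' σ r hr]
            conv_rhs => rw [← Nat.sub_add_cancel hl]
            rfl
          simp only [A2]
          rw [if_neg (by omega), mem_singleton]
          rcases ht with rfl | rfl
          · rw [hans 1 (by norm_num)]
            have := hans 0 (by norm_num)
            rw [show 4 * (l - 1) + 1 - 1 = 4 * (l - 1) + 0 by omega, this]
            simpa [hwd, hst] using hx.symm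
          · rw [hans 3 (by norm_num)]
            have := hans 2 (by norm_num)
            rw [show 4 * (l - 1) + 3 - 1 = 4 * (l - 1) + 2 by omega, this]
            simpa [hwd, hst] using hy.symm
      · right
        obtain ⟨I, hIK, hIc⟩ := exists_subset_card_eq (show 3 ≤ K.card by omega)
        rw [mem_biUnion]
        refine ⟨I, ?_, ?_⟩
        · rw [mem_powersetCard]
          exact ⟨hIK.trans (filter_subset _ _), hIc⟩
        · rw [hE, mem_filter]
          refine ⟨mem_univ _, fun t ht => ?_⟩
          have := hIK ht
          rw [hK, mem_filter] at this
          exact this.2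
    exact (card_le_card hsub).trans ((card_union_le _ _).trans
      (Nat.add_le_add_left card_biUnion_le _))
  · rw [hI2c, one_pow, one_mul] at r2
    exact r2
  · rw [sum_mul]
    calc _ ≤ ∑ I ∈ powersetCard 3 (range (4 * l)), (4 * l + 4) ^ 3 * Fintype.card (Om n) :=
          sum_le_sum r3
      _ = (4 * l).choose 3 * ((4 * l + 4) ^ 3 * Fintype.card (Om n)) := by
          rw [sum_const, card_powersetCard, card_range, smul_eq_mul]
      _ ≤ (4 * l) ^ 3 * ((4 * l + 4) ^ 3 * Fintype.card (Om n)) := by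
          gcongr; exact Nat.choose_le_pow _ _
      _ = _ := by ring
end RA

namespace RA
open Finset

theorem walk_add {n : ℕ} (σ : Om n) (u : ℕ → Bool) (x : Fin n) (d j : ℕ) :
    walk σ u x (d + j) = walk σ (fun i => u (d + i)) (walk σ u x d) j := by
  induction j with
  | zero => rfl
  | succ j ih => rw [← Nat.add_assoc]; simp only [walk]; rw [ih]

theorem walk_congr {n : ℕ} (σ : Om n) (u v : ℕ → Bool) (x : Fin n) (j : ℕ)
    (h : ∀ i < j, u i = v i) : walk σ u x j = walk σ v x j := by
  induction j with
  | zero => rfl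
  | succ j ih => simp only [walk]; rw [ih fun i hi => h i (by omega), h j (by omega)]

theorem walk_inj {n : ℕ} (σ : Om n) (u : ℕ → Bool) (j : ℕ) : Function.Injective
    (fun x : Fin n => walk σ u x j) := by
  induction j with
  | zero => intro x y h; exact h
  | succ j ih => intro x y h; simp only [walk] at h; exact ih ((σ _).injective h)

noncomputable def dl (n T : ℕ) : ℝ := 1 / ((n - T : ℕ) : ℝ) ^ 2 +
  (T : ℝ) ^ 3 * (T + 4) ^ 3 / ((n - T : ℕ) : ℝ) ^ 3

theorem fixed_pair_real {n : ℕ} (u v : ℕ → Bool) (x y : Fin n) (hxy : x ≠ y) (l k : ℕ) (hl : 0 < l)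
    (hlk : l ≤ k) (hk : 4 * k < n)
    (h0 : u 0 ≠ v 0) (h1 : u (l - 1) ≠ v (l - 1)) :
    ((univ.filter (fun σ : Om n => walk σ u x l = walk σ v x l ∧
        walk σ u y l = walk σ v y l)).card : ℝ) ≤ Fintype.card (Om n) * dl n (4 * k) := by
  obtain ⟨p, q, h, hp, hq⟩ := fixed_pair u v x y hxy l hl h0 h1
  have hpos : 0 < ((n - 4 * k : ℕ) : ℝ) := by exact_mod_cast (by omega : 0 < n - 4 * k)
  have hle : n - 4 * k ≤ n - 4 * l := by omega
  have hp' : p * (n - 4 * k) ^ 2 ≤ Fintype.card (Om n) := le_trans (by gcongr) hp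
  have hq' : q * (n - 4 * k) ^ 3 ≤ (4 * k) ^ 3 * (4 * k + 4) ^ 3 * Fintype.card (Om n) :=
    le_trans (by gcongr) (hq.trans (by gcongr))
  have hp2 : (p : ℝ) * ((n - 4 * k : ℕ) : ℝ) ^ 2 ≤ Fintype.card (Om n) := by exact_mod_cast hp'
  have hq2 : (q : ℝ) * ((n - 4 * k : ℕ) : ℝ) ^ 3 ≤
      ((4 * k : ℕ) : ℝ) ^ 3 * ((4 * k : ℕ) + 4) ^ 3 * Fintype.card (Om n) := by exact_mod_cast hq'
  have h' : ((univ.filter (fun σ : Om n => walk σ u x l = walk σ v x l ∧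
        walk σ u y l = walk σ v y l)).card : ℝ) ≤ p + q := by exact_mod_cast h
  refine h'.trans ?_
  have hp3 := (le_div_iff₀ (by positivity)).2 hp2
  have hq3 := (le_div_iff₀ (by positivity)).2 hq2
  calc (p : ℝ) + q ≤ _ := add_le_add hp3 hq3
    _ = _ := by rw [dl]; ring

def ext {k : ℕ} (u : Fin k → Bool) : ℕ → Bool := fun j => if h : j < k then u ⟨j, h⟩ else false

def act {n k : ℕ} (σ : Om n) (u : Fin k → Bool) (x : Fin n) : Fin n := walk σ (ext u) x k

def fixc {n k : ℕ} (σ : Om n) (u v : Fin k → Bool) : ℕ :=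
  ((univ : Finset (Fin n)).offDiag.filter (fun p => act σ u p.1 = act σ v p.1 ∧
    act σ u p.2 = act σ v p.2)).card

theorem fixc_sum {n k : ℕ} (u v : Fin k → Bool) (huv : u ≠ v) (hk : 4 * k < n) :
    (∑ σ : Om n, (fixc σ u v : ℝ)) ≤
      Fintype.card (Om n) * ((univ : Finset (Fin n)).offDiag.card * dl n (4 * k)) := by
  set U := ext u with hU
  set V := ext v with hV
  have hex : ∃ j, j < k ∧ U j ≠ V j := by
    by_contra hne
    push Not at hne
    apply huv
    funext ⟨j, hj⟩
    have := hne j hj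
    simpa [hU, hV, ext, hj] using this
  have hd := Nat.find_spec hex
  have hdm : ∀ j < Nat.find hex, U j = V j := by
    intro j hj
    have := Nat.find_min hex hj
    by_contra hne
    exact this ⟨by omega, hne⟩
  set d := Nat.find hex
  obtain ⟨e, he, hem⟩ : ∃ e, (e < k ∧ U e ≠ V e ∧ d ≤ e) ∧ ∀ j, e < j → j < k → U j = V j := by
    have hne : ((range k).filter (fun j => U j ≠ V j)).Nonempty :=
      ⟨d, by rw [mem_filter, mem_range]; exact hd⟩
    have hm := max'_mem _ hne
    refine ⟨((range k).filter (fun j => U j ≠ V j)).max' hne, ⟨?_, ?_, ?_⟩, ?_⟩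
    · exact mem_range.1 (mem_filter.1 hm).1
    · exact (mem_filter.1 hm).2
    · exact le_max' _ _ (by rw [mem_filter, mem_range]; exact hd)
    · intro j hj hjk
      by_contra hc
      have := le_max' ((range k).filter (fun j => U j ≠ V j)) j
        (by rw [mem_filter, mem_range]; exact ⟨hjk, hc⟩)
      omega
  obtain ⟨l, hl⟩ : ∃ l, e = d + l := ⟨e - d, by omega⟩
  set U' : ℕ → Bool := fun i => U (d + i) with hU'
  set V' : ℕ → Bool := fun i => V (d + i) with hV'
  have hred : ∀ (σ : Om n) x, walk σ U x k = walk σ V x k →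
      walk σ U' (walk σ U x d) (l + 1) = walk σ V' (walk σ U x d) (l + 1) := by
    intro σ x h
    have e1 : k = (d + (l + 1)) + (k - (d + (l + 1))) := by omega
    rw [e1, walk_add, walk_add σ V] at h
    rw [walk_congr σ (fun i => U (d + (l + 1) + i)) (fun i => V (d + (l + 1) + i)) _ _
      (fun i hi => hem _ (by omega) (by omega))] at h
    have h2 := walk_inj σ _ _ h
    rw [walk_add, walk_add σ V, ← walk_congr σ U V x d hdm] at h2
    exact h2
  have hle : ∀ σ : Om n, fixc σ u v ≤ ((univ : Finset (Fin n)).offDiag.filter (fun p =>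
      walk σ U' p.1 (l + 1) = walk σ V' p.1 (l + 1) ∧
      walk σ U' p.2 (l + 1) = walk σ V' p.2 (l + 1))).card := by
    intro σ
    refine card_le_card_of_injOn (fun p => (walk σ U p.1 d, walk σ U p.2 d)) ?_ ?_
    · rintro ⟨x, y⟩ h
      simp only [coe_filter, mem_offDiag, mem_univ, true_and, Set.mem_setOf_eq] at h ⊢
      exact ⟨fun hc => h.1 (walk_inj σ U d hc), hred σ x h.2.1, hred σ y h.2.2⟩
    · rintro ⟨x, y⟩ _ ⟨x', y'⟩ _ h
      simp only [Prod.mk.injEq] at h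
      rw [walk_inj σ U d h.1, walk_inj σ U d h.2]
  calc (∑ σ : Om n, (fixc σ u v : ℝ)) ≤ ∑ σ : Om n,
        (((univ : Finset (Fin n)).offDiag.filter (fun p =>
      walk σ U' p.1 (l + 1) = walk σ V' p.1 (l + 1) ∧
      walk σ U' p.2 (l + 1) = walk σ V' p.2 (l + 1))).card : ℝ) :=
        sum_le_sum fun σ _ => by exact_mod_cast hle σ
    _ = ∑ p ∈ (univ : Finset (Fin n)).offDiag, ((univ.filter (fun σ : Om n =>
      walk σ U' p.1 (l + 1) = walk σ V' p.1 (l + 1) ∧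
      walk σ U' p.2 (l + 1) = walk σ V' p.2 (l + 1))).card : ℝ) := by
        simp only [card_filter, Nat.cast_sum]
        rw [sum_comm]
    _ ≤ ∑ p ∈ (univ : Finset (Fin n)).offDiag, (Fintype.card (Om n) * dl n (4 * k)) := by
        apply sum_le_sum
        intro p hp
        apply fixed_pair_real U' V' p.1 p.2 (mem_offDiag.1 hp).2.2 (l + 1) k (by omega)
          (by omega) hk
        · exact hd.2
        · have := he.2.1
          rw [hl] at this
          exact this
    _ = _ := by rw [sum_const, nsmul_eq_mul]; ring
end RA

namespace RA
open Finset

theorem wordAction_append {Q : Type*} (w w' : List (Q → Q)) (q : Q) :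
    wordAction (w ++ w') q = wordAction w' (wordAction w q) := by
  simp [wordAction, List.foldl_append]

theorem walk_word {n : ℕ} (σ : Om n) (u : ℕ → Bool) (x : Fin n) (k : ℕ) :
    wordAction ((List.range k).map (fun j => (⇑(σ (u j)) : Fin n → Fin n))) x = walk σ u x k := by
  induction k with
  | zero => rfl
  | succ k ih => rw [List.range_succ, List.map_append, wordAction_append, ih]; rfl

abbrev X (n : ℕ) := {p : Fin n × Fin n // p.1 ≠ p.2}

def actP {n k : ℕ} (σ : Om n) (u : Fin k → Bool) (p : X n) : X n :=
  ⟨(act σ u p.1.1, act σ u p.1.2), fun h => p.2 (walk_inj σ _ _ h)⟩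

theorem actP_inj {n k : ℕ} (σ : Om n) (u : Fin k → Bool) : Function.Injective (actP σ u) := by
  rintro ⟨⟨x, y⟩, h⟩ ⟨⟨x', y'⟩, h'⟩ e
  simp only [actP, Subtype.mk.injEq, Prod.mk.injEq] at e ⊢
  exact ⟨walk_inj σ _ _ e.1, walk_inj σ _ _ e.2⟩

def mm {n : ℕ} (k : ℕ) (σ : Om n) (p q : X n) : ℝ := ∑ u : Fin k → Bool, if actP σ u p = q then 1 else 0

theorem fixc_eq {n k : ℕ} (σ : Om n) (u v : Fin k → Bool) :
    (fixc σ u v : ℝ) = ∑ p : X n, if actP σ u p = actP σ v p then 1 else 0 := by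
  rw [fixc, card_filter, Nat.cast_sum]
  rw [Finset.sum_subtype (univ : Finset (Fin n)).offDiag (p := fun p => p.1 ≠ p.2) (by simp)]
  apply sum_congr rfl
  intro p _
  simp only [actP, Subtype.mk.injEq, Prod.mk.injEq]
  split_ifs <;> simp

theorem mm_sq {n k : ℕ} (σ : Om n) :
    ∑ p : X n, ∑ q : X n, mm k σ p q ^ 2 = ∑ u : Fin k → Bool, ∑ v : Fin k → Bool, (fixc σ u v : ℝ) := by
  simp only [fixc_eq]
  have h1 : ∀ p q : X n, mm k σ p q ^ 2 = ∑ u : Fin k → Bool, ∑ v : Fin k → Bool,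
      (if actP σ u p = q then (if actP σ v p = q then (1 : ℝ) else 0) else 0) := by
    intro p q
    rw [sq, mm, sum_mul_sum]
    apply sum_congr rfl; intro u _
    apply sum_congr rfl; intro v _
    split_ifs <;> simp
  simp only [h1]
  have h2 : ∀ p : X n, ∑ q : X n, ∑ u : Fin k → Bool, ∑ v : Fin k → Bool,
      (if actP σ u p = q then (if actP σ v p = q then (1 : ℝ) else 0) else 0) =
      ∑ u : Fin k → Bool, ∑ v : Fin k → Bool, if actP σ u p = actP σ v p then (1 : ℝ) else 0 := by
    intro p
    rw [sum_comm]
    apply sum_congr rfl; intro u _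
    rw [sum_comm]
    apply sum_congr rfl; intro v _
    rw [Finset.sum_ite_eq]
    simp [eq_comm]
  simp only [h2]
  rw [sum_comm]
  apply sum_congr rfl; intro u _
  rw [sum_comm]

theorem mm_row {n k : ℕ} (σ : Om n) (p : X n) : ∑ q : X n, mm k σ p q = 2 ^ k := by
  simp only [mm]
  rw [sum_comm]
  simp

theorem mm_col {n k : ℕ} (σ : Om n) (q : X n) : ∑ p : X n, mm k σ p q = 2 ^ k := by
  simp only [mm]
  rw [sum_comm]
  have : ∀ u : Fin k → Bool, ∑ p : X n, (if actP σ u p = q then (1 : ℝ) else 0) = 1 := by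
    intro u
    have hb : Function.Bijective (actP σ u) := Finite.injective_iff_bijective.1 (actP_inj σ u)
    rw [hb.sum_comp (fun r => if r = q then (1 : ℝ) else 0)]
    simp
  simp [this]

def fro {ι : Type*} [Fintype ι] (A : Matrix ι ι ℝ) : ℝ := ∑ i, ∑ j, A i j ^ 2

theorem fro_nonneg {ι : Type*} [Fintype ι] (A : Matrix ι ι ℝ) : 0 ≤ fro A := by
  unfold fro; positivity

theorem fro_mul {ι : Type*} [Fintype ι] (A B : Matrix ι ι ℝ) : fro (A * B) ≤ fro A * fro B := by
  have : fro A * fro B = ∑ i, ∑ j, (∑ k, A i k ^ 2) * (∑ k, B k j ^ 2) := by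
    unfold fro
    rw [sum_comm (f := fun i j => B i j ^ 2), sum_mul_sum]
  rw [this]
  unfold fro
  refine sum_le_sum fun i _ => sum_le_sum fun j _ => ?_
  rw [Matrix.mul_apply]
  exact sum_mul_sq_le_sq_mul_sq _ _ _

theorem fro_pow {ι : Type*} [Fintype ι] [DecidableEq ι] (A : Matrix ι ι ℝ) (j : ℕ) :
    fro (A ^ (j + 1)) ≤ fro A ^ (j + 1) := by
  induction j with
  | zero => simp
  | succ j ih =>
    rw [pow_succ, pow_succ (fro A)]
    exact (fro_mul _ _).trans (mul_le_mul_of_nonneg_right ih (fro_nonneg A))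

theorem fro_entry {ι : Type*} [Fintype ι] (A : Matrix ι ι ℝ) (i j : ι) : A i j ^ 2 ≤ fro A := by
  unfold fro
  refine le_trans ?_ (single_le_sum (f := fun i => ∑ j, A i j ^ 2)
    (fun i _ => by positivity) (mem_univ i))
  exact single_le_sum (f := fun j => A i j ^ 2) (fun i _ => by positivity) (mem_univ j)

noncomputable def MM {n : ℕ} (k : ℕ) (σ : Om n) : Matrix (X n) (X n) ℝ :=
  Matrix.of fun p q => mm k σ p q / 2 ^ k

noncomputable def JJ (n : ℕ) : Matrix (X n) (X n) ℝ :=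
  Matrix.of fun _ _ => 1 / (Fintype.card (X n) : ℝ)

theorem MM_word {n k : ℕ} (σ : Om n) (j : ℕ) : ∀ p q : X n, (MM k σ ^ j) p q ≠ 0 →
    ∃ w : List (Fin n → Fin n), (∀ f ∈ w, f = ⇑(σ true) ∨ f = ⇑(σ false)) ∧ w.length = j * k ∧
      wordAction w p.1.1 = q.1.1 ∧ wordAction w p.1.2 = q.1.2 := by
  induction j with
  | zero =>
    intro p q h
    rw [pow_zero, Matrix.one_apply] at h
    have : p = q := by by_contra hne; simp [hne] at h
    subst this
    exact ⟨[], by simp, by simp, rfl, rfl⟩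
  | succ j ih =>
    intro p q h
    rw [pow_succ, Matrix.mul_apply] at h
    obtain ⟨r, _, hr⟩ := exists_ne_zero_of_sum_ne_zero h
    obtain ⟨w, hw, hlen, e1, e2⟩ := ih p r (left_ne_zero_of_mul hr)
    have h2 := right_ne_zero_of_mul hr
    have h3 : mm k σ r q ≠ 0 := by
      intro h0
      apply h2
      simp [MM, h0]
    rw [mm] at h3
    obtain ⟨u, _, hu⟩ := exists_ne_zero_of_sum_ne_zero h3
    have hu' : actP σ u r = q := by by_contra hne; simp [hne] at hu
    subst hu'
    refine ⟨w ++ (List.range k).map (fun j => (⇑(σ (ext u j)) : Fin n → Fin n)), ?_, ?_, ?_, ?_⟩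
    · intro f hf
      rw [List.mem_append] at hf
      rcases hf with hf | hf
      · exact hw f hf
      · obtain ⟨j, _, rfl⟩ := List.mem_map.1 hf
        cases ext u j
        · right; rfl
        · left; rfl
    · simp [hlen]; ring
    · rw [wordAction_append, e1, walk_word]; rfl
    · rw [wordAction_append, e2, walk_word]; rfl

theorem fro_eq {n k : ℕ} (σ : Om n) (hN : 0 < Fintype.card (X n)) : fro (MM k σ - JJ n) =
    (∑ u : Fin k → Bool, ∑ v : Fin k → Bool, (fixc σ u v : ℝ)) / (2 ^ k) ^ 2 - 1 := by
  have hN' : (0 : ℝ) < Fintype.card (X n) := by exact_mod_cast hN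
  set N : ℝ := (Fintype.card (X n) : ℝ) with hNd
  set D := MM k σ - JJ n with hD
  rw [← mm_sq]
  have e1 : ∀ i j, D i j ^ 2 = mm k σ i j ^ 2 / (2 ^ k) ^ 2 - 2 / (2 ^ k * N) * mm k σ i j + 1 / N ^ 2 := by
    intro i j
    simp only [hD, Matrix.sub_apply, MM, JJ, Matrix.of_apply]
    rw [← hNd]
    field_simp
    ring
  unfold fro
  simp only [e1, sum_add_distrib, sum_sub_distrib, ← mul_sum, ← sum_div, mm_row, sum_const,
    card_univ, nsmul_eq_mul]
  rw [← hNd]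
  field_simp
  ring

theorem mixing {n k : ℕ} (σ : Om n) (hN : 0 < Fintype.card (X n)) (ε : ℝ)
    (h : (∑ u : Fin k → Bool, ∑ v : Fin k → Bool, (fixc σ u v : ℝ)) / (2 ^ k) ^ 2 - 1 ≤ ε)
    (hε : ε ^ 10 < (1 / (Fintype.card (X n) : ℝ)) ^ 2) (p q : X n) :
    ∃ w : List (Fin n → Fin n), (∀ f ∈ w, f = ⇑(σ true) ∨ f = ⇑(σ false)) ∧ w.length = 10 * k ∧
      wordAction w p.1.1 = q.1.1 ∧ wordAction w p.1.2 = q.1.2 := by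
  apply MM_word
  have hN' : (0 : ℝ) < Fintype.card (X n) := by exact_mod_cast hN
  set N : ℝ := (Fintype.card (X n) : ℝ) with hNd
  set D := MM k σ - JJ n with hD
  have hJJ : JJ n * JJ n = JJ n := by
    ext i j
    simp only [JJ, Matrix.mul_apply, Matrix.of_apply, sum_const, card_univ, nsmul_eq_mul]
    rw [← hNd]; field_simp
  have hMJ : MM k σ * JJ n = JJ n := by
    ext i j
    simp only [JJ, MM, Matrix.mul_apply, Matrix.of_apply]
    rw [← sum_mul, ← sum_div, mm_row]
    field_simp
  have hJM : JJ n * MM k σ = JJ n := by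
    ext i j
    simp only [JJ, MM, Matrix.mul_apply, Matrix.of_apply]
    rw [← mul_sum, ← sum_div, mm_col]
    field_simp
  have hpow : ∀ j, D ^ (j + 1) = MM k σ ^ (j + 1) - JJ n := by
    intro j
    induction j with
    | zero => simp [hD]
    | succ j ih =>
      have hMjJ : MM k σ ^ (j + 1) * JJ n = JJ n := by
        clear ih
        induction j with
        | zero => simpa using hMJ
        | succ j ih => rw [pow_succ, mul_assoc, hMJ, ih]
      rw [pow_succ, ih, hD, sub_mul, mul_sub, mul_sub, hMjJ, hJM, hJJ, ← pow_succ]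
      simp
  have hfro : fro D = (∑ u : Fin k → Bool, ∑ v : Fin k → Bool, (fixc σ u v : ℝ)) / (2 ^ k) ^ 2 - 1 :=
    fro_eq σ hN
  intro h0
  have hen : (D ^ (9 + 1)) p q = - (1 / N) := by
    rw [hpow 9, Matrix.sub_apply, h0]
    simp [JJ, hNd]
  have b1 := fro_entry (D ^ (9 + 1)) p q
  have b2 := fro_pow D 9
  have b3 : fro D ^ (9 + 1) ≤ ε ^ 10 := pow_le_pow_left₀ (fro_nonneg D) (hfro ▸ h) 10
  rw [hen, neg_sq] at b1
  linarith
end RA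

namespace RA
open Finset

theorem card_X (n : ℕ) : Fintype.card (X n) = (univ : Finset (Fin n)).offDiag.card := by
  rw [Fintype.card_subtype]
  congr 1
  ext p
  simp

noncomputable def SS {n : ℕ} (k : ℕ) (σ : Om n) : ℝ :=
  (∑ u : Fin k → Bool, ∑ v : Fin k → Bool, (fixc σ u v : ℝ)) / (2 ^ k) ^ 2 - 1

theorem dl_nonneg (n T : ℕ) : 0 ≤ dl n T := by unfold dl; positivity

theorem SS_sum {n k : ℕ} (hk : 4 * k < n) : ∑ σ : Om n, SS k σ ≤
    Fintype.card (Om n) * (Fintype.card (X n) / 2 ^ k + Fintype.card (X n) * dl n (4 * k) - 1) := by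
  set N : ℝ := (Fintype.card (X n) : ℝ) with hN
  have e : (∑ σ : Om n, SS k σ) = (∑ u : Fin k → Bool, ∑ v : Fin k → Bool,
      ∑ σ : Om n, (fixc σ u v : ℝ)) / (2 ^ k) ^ 2 - Fintype.card (Om n) := by
    simp only [SS, sum_sub_distrib, ← sum_div, sum_const, card_univ, nsmul_eq_mul, mul_one]
    rw [sum_comm]
    congr 2
    apply sum_congr rfl; intro u _
    rw [sum_comm]
  have b : ∀ u v : Fin k → Bool, ∑ σ : Om n, (fixc σ u v : ℝ) ≤
      (if u = v then Fintype.card (Om n) * N else 0) + Fintype.card (Om n) * (N * dl n (4 * k)) := by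
    intro u v
    split_ifs with h
    · have hf : ∀ σ : Om n, (fixc σ u v : ℝ) ≤ N := by
        intro σ
        rw [hN, card_X]
        exact_mod_cast card_filter_le _ _
      calc ∑ σ : Om n, (fixc σ u v : ℝ) ≤ ∑ σ : Om n, N := sum_le_sum fun σ _ => hf σ
        _ = Fintype.card (Om n) * N := by rw [sum_const, card_univ, nsmul_eq_mul]
        _ ≤ _ := by
          have := dl_nonneg n (4 * k)
          have : 0 ≤ Fintype.card (Om n) * (N * dl n (4 * k)) := by positivity
          linarith
    · rw [zero_add, hN, card_X]
      exact fixc_sum u v h hk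
  have b2 : ∑ u : Fin k → Bool, ∑ v : Fin k → Bool, ∑ σ : Om n, (fixc σ u v : ℝ) ≤
      2 ^ k * (Fintype.card (Om n) * N) + (2 ^ k) ^ 2 * (Fintype.card (Om n) * (N * dl n (4 * k))) := by
    refine (sum_le_sum fun u _ => sum_le_sum fun v _ => b u v).trans (le_of_eq ?_)
    simp [sum_add_distrib]
    ring
  rw [e]
  have hK : (0 : ℝ) < 2 ^ k := by positivity
  rw [sub_le_iff_le_add, div_le_iff₀ (by positivity)]
  refine b2.trans (le_of_eq ?_)
  field_simp
  ring

theorem badB {n k : ℕ} (hk : 4 * k < n) (hN : 0 < Fintype.card (X n)) (ε : ℝ) :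
    ε * ((univ.filter (fun σ : Om n => ¬ SS k σ ≤ ε)).card : ℝ) ≤
    Fintype.card (Om n) * (Fintype.card (X n) / 2 ^ k + Fintype.card (X n) * dl n (4 * k) - 1) := by
  refine le_trans ?_ (SS_sum hk)
  have h0 : ∀ σ : Om n, 0 ≤ SS k σ := fun σ => by
    unfold SS; rw [← fro_eq σ hN]; exact fro_nonneg _
  rw [mul_comm, ← nsmul_eq_mul, ← sum_const]
  refine (sum_le_sum fun σ hσ => ?_).trans
    (sum_le_sum_of_subset_of_nonneg (filter_subset _ _) fun σ _ _ => h0 σ)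
  exact (not_le.1 (mem_filter.1 hσ).2).le


def Dst {n : ℕ} (x : Fin n) (j : ℕ) (a : Fin n → Fin n) : Prop :=
  ∀ i ≤ j, ∀ i' ≤ j, a^[i] x = a^[i'] x → i = i'

open Classical in
theorem reveal_map {n : ℕ} (x : Fin n) (j m : ℕ) (A : (Fin n → Fin n) → Finset (Fin n))
    (hA : ∀ a a' : Fin n → Fin n, (∀ i ≤ j, a^[i] x = a'^[i] x) → A a = A a')
    (hm : ∀ a, Dst x j a → (A a).card ≤ m) :
    (univ.filter (fun a : Fin n → Fin n => Dst x j a ∧ a^[j+1] x ∈ A a)).card * n ≤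
      m * (univ.filter (fun a : Fin n → Fin n => Dst x j a)).card := by
  set F := univ.filter (fun a : Fin n → Fin n => Dst x j a ∧ a^[j+1] x ∈ A a) with hF
  set F' := univ.filter (fun a : Fin n → Fin n => Dst x j a) with hF'
  have h1 : F.card * n = (F ×ˢ (univ : Finset (Fin n))).card := by simp
  have h2 : (F'.sigma (fun τ => A τ)).card ≤ m * F'.card := by
    rw [card_sigma, mul_comm, ← smul_eq_mul, ← sum_const]
    exact sum_le_sum fun a ha => hm a (mem_filter.1 ha).2
  have key : ∀ a y, Dst x j a → ∀ i ≤ j, a^[i] x = (Function.update a (a^[j] x) y)^[i] x := by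
    intro a y ha i
    induction i with
    | zero => intro _; rfl
    | succ i ih =>
      intro hi
      rw [Function.iterate_succ_apply', Function.iterate_succ_apply', ← ih (by omega),
        Function.update_of_ne]
      intro h
      have := ha i (by omega) j le_rfl h
      omega
  rw [h1]
  refine le_trans ?_ h2
  refine card_le_card_of_injOn
    (fun p => ⟨Function.update p.1 (p.1^[j] x) p.2, p.1^[j+1] x⟩) ?_ ?_
  · rintro ⟨a, y⟩ hp
    simp only [coe_product, Set.mem_prod, coe_sigma, Set.mem_sigma_iff, mem_coe] at hp ⊢
    have hp := (mem_filter.1 hp.1).2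
    have k1 := key a y hp.1
    refine ⟨?_, ?_⟩
    · rw [hF', mem_filter]
      refine ⟨mem_univ _, fun i hi i' hi' h => ?_⟩
      rw [← k1 i hi, ← k1 i' hi'] at h
      exact hp.1 i hi i' hi' h
    · rw [← hA a _ k1]; exact hp.2
  · rintro ⟨a, y⟩ hp ⟨a', y'⟩ hp' heq
    simp only [coe_product, Set.mem_prod, mem_coe] at hp hp'
    simp only [Sigma.mk.injEq, heq_eq_eq] at heq
    obtain ⟨e1, e2⟩ := heq
    have d1 := (mem_filter.1 hp.1).2.1
    have d2 := (mem_filter.1 hp'.1).2.1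
    have z : a^[j] x = a'^[j] x := by rw [key a y d1 j le_rfl, key a' y' d2 j le_rfl, e1]
    have hy : y = y' := by
      have := congrFun e1 (a^[j] x)
      rw [Function.update_self, z, Function.update_self] at this
      exact this
    have ha : a = a' := by
      funext w
      by_cases hw : w = a^[j] x
      · rw [Function.iterate_succ_apply', Function.iterate_succ_apply'] at e2
        rw [hw]
        conv_rhs => rw [z]
        exact e2
      · have := congrFun e1 w
        rwa [Function.update_of_ne hw, Function.update_of_ne (by rwa [← z])] at this
    rw [ha, hy]

open Classical in
theorem Dst_card {n : ℕ} (x : Fin n) (j : ℕ) :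
    ((univ.filter (fun a : Fin n → Fin n => Dst x j a)).card : ℝ) ≤
      Fintype.card (Fin n → Fin n) * Real.exp (-(j * (j + 1) / (2 * n))) := by
  have hn : 0 < n := x.pos
  have hn' : (0 : ℝ) < n := by exact_mod_cast hn
  induction j with
  | zero =>
    have h := Finset.card_le_univ (univ.filter (fun a : Fin n → Fin n => Dst x 0 a))
    have h2 : ((univ.filter (fun a : Fin n → Fin n => Dst x 0 a)).card : ℝ) ≤
      Fintype.card (Fin n → Fin n) := by exact_mod_cast h
    have h3 : Real.exp (-(((0 : ℕ) : ℝ) * (((0 : ℕ) : ℝ) + 1) / (2 * n))) = 1 := by simp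
    rw [h3, mul_one]
    exact h2
  | succ j ih =>
    have h := reveal_map x j (n - (j + 1))
      (fun a => univ \ (range (j + 1)).image (fun i => a^[i] x))
      (by
        intro a a' h
        congr 1
        apply image_congr
        intro i hi
        simp only [coe_range, Set.mem_Iio] at hi
        exact h i (by omega))
      (by
        intro a ha
        rw [card_sdiff_of_subset (subset_univ _), card_image_of_injOn]
        · simp
        · intro i hi i' hi' h
          simp only [coe_range, Set.mem_Iio] at hi hi'
          exact ha i (by omega) i' (by omega) h)
    have hsub : (univ.filter (fun a : Fin n → Fin n => Dst x (j + 1) a)).card ≤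
        (univ.filter (fun a : Fin n → Fin n => Dst x j a ∧
          a^[j+1] x ∈ univ \ (range (j + 1)).image (fun i => a^[i] x))).card := by
      apply card_le_card
      intro a ha
      have ha := (mem_filter.1 ha).2
      rw [mem_filter]
      refine ⟨mem_univ _, fun i hi i' hi' h => ha i (by omega) i' (by omega) h, ?_⟩
      rw [mem_sdiff]
      refine ⟨mem_univ _, fun hc => ?_⟩
      obtain ⟨i, hi, h⟩ := mem_image.1 hc
      rw [mem_range] at hi
      have := ha i (by omega) (j + 1) le_rfl h
      omega
    have h' := (Nat.mul_le_mul_right n hsub).trans h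
    set c1 := (univ.filter (fun a : Fin n → Fin n => Dst x (j + 1) a)).card
    set c0 := (univ.filter (fun a : Fin n → Fin n => Dst x j a)).card
    have hr : (c1 : ℝ) * n ≤ ((n - (j + 1) : ℕ) : ℝ) * c0 := by exact_mod_cast h'
    have hexp : ((n - (j + 1) : ℕ) : ℝ) ≤ n * Real.exp (-((j + 1) / n)) := by
      rcases Nat.lt_or_ge n (j + 1) with hlt | hge
      · rw [Nat.sub_eq_zero_of_le hlt.le]; simp; positivity
      · rw [Nat.cast_sub hge]
        have := Real.add_one_le_exp (-(((j : ℝ) + 1) / n))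
        calc (n : ℝ) - ((j + 1 : ℕ) : ℝ) = n * (-(((j : ℝ) + 1) / n) + 1) := by
              push_cast; field_simp; ring
          _ ≤ _ := by gcongr
    have : (c1 : ℝ) * n ≤ (Fintype.card (Fin n → Fin n) *
        Real.exp (-(((j + 1 : ℕ) : ℝ) * ((j + 1 : ℕ) + 1) / (2 * n)))) * n := by
      calc (c1 : ℝ) * n ≤ (n * Real.exp (-((j + 1) / n))) *
            (Fintype.card (Fin n → Fin n) * Real.exp (-(j * (j + 1) / (2 * n)))) :=
            hr.trans (by gcongr)
        _ = (Fintype.card (Fin n → Fin n) *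
            (Real.exp (-(j * (j + 1) / (2 * n))) * Real.exp (-((j + 1) / n)))) * n := by ring
        _ = _ := by
          rw [← Real.exp_add]
          congr 3
          push_cast
          field_simp
          ring_nf
    exact le_of_mul_le_mul_right this hn'
end RA

namespace RA
open Finset

open Classical in
noncomputable def cyc {n : ℕ} (t : ℕ) (a : Fin n → Fin n) : Finset (Fin n) :=
  univ.filter (fun x => ∃ j < t, Dst x j a ∧ a^[j+1] x = x)

open Classical in
theorem mem_cyc {n : ℕ} {t : ℕ} {a : Fin n → Fin n} {x : Fin n} :
    x ∈ cyc t a ↔ ∃ j < t, Dst x j a ∧ a^[j+1] x = x := by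
  unfold cyc
  rw [mem_filter]
  exact ⟨fun h => h.2, fun h => ⟨mem_univ _, h⟩⟩

theorem img_cyc {n : ℕ} (t : ℕ) (a : Fin n → Fin n) (h : ∀ z, ¬ Dst z t a) :
    (univ : Finset (Fin n)).image (a^[t]) ⊆ cyc t a := by
  intro x hx
  obtain ⟨z, -, rfl⟩ := mem_image.1 hx
  have hz := h z
  unfold Dst at hz
  push Not at hz
  obtain ⟨i, hi, i', hi', he, hne⟩ := hz
  have main : ∀ i i', i < i' → i' ≤ t → a^[i] z = a^[i'] z → a^[t] z ∈ cyc t a := by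
    intro i i' hlt hi' he
    have hp : Function.IsPeriodicPt a (i' - i) (a^[i] z) := by
      unfold Function.IsPeriodicPt Function.IsFixedPt
      rw [← Function.iterate_add_apply, Nat.sub_add_cancel hlt.le, he]
    have hp2 : Function.IsPeriodicPt a (i' - i) (a^[t] z) := by
      have := hp.apply_iterate (t - i)
      rwa [← Function.iterate_add_apply, Nat.sub_add_cancel (by omega)] at this
    have hpos := hp2.minimalPeriod_pos (by omega)
    have hle := hp2.minimalPeriod_le (by omega)
    rw [mem_cyc]
    refine ⟨Function.minimalPeriod a (a^[t] z) - 1, by omega, ?_, ?_⟩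
    · intro u hu u' hu' e
      exact Function.iterate_injOn_Iio_minimalPeriod (f := a) (x := a^[t] z)
        (Set.mem_Iio.2 (by omega)) (Set.mem_Iio.2 (by omega)) e
    · rw [Nat.sub_add_cancel hpos]
      exact Function.iterate_minimalPeriod
  rcases lt_or_gt_of_ne hne with hlt | hlt
  · exact main i i' hlt hi' he
  · exact main i' i hlt hi he.symm

open Classical in
theorem close_card {n : ℕ} (x : Fin n) (j : ℕ) :
    ((univ.filter (fun a : Fin n → Fin n => Dst x j a ∧ a^[j+1] x = x)).card : ℝ) * n ≤
      Fintype.card (Fin n → Fin n) * Real.exp (-(j * (j + 1) / (2 * n))) := by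
  have h := reveal_map x j 1 (fun _ => {x}) (fun _ _ _ => rfl) (fun _ _ => by simp)
  simp only [mem_singleton, one_mul] at h
  refine le_trans ?_ (Dst_card x j)
  exact_mod_cast h

theorem exp_sum (n t : ℕ) (hn : 0 < n) :
    ∑ j ∈ range t, Real.exp (-((j:ℝ) * (j + 1) / (2 * n))) ≤ 4 * Real.sqrt n := by
  set r := Real.sqrt n with hr
  have hr1 : 1 ≤ r := by
    rw [hr]; exact Real.one_le_sqrt.2 (by exact_mod_cast hn)
  have hrr : r * r = n := Real.mul_self_sqrt (by positivity)
  have hr0 : 0 < r := by linarith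
  set q := Real.exp (-(1 / r)) with hq
  have b : ∀ j ∈ range t, Real.exp (-((j:ℝ) * (j + 1) / (2 * n))) ≤ 2 * q ^ j := by
    intro j _
    have e1 : -((j:ℝ) * (j + 1) / (2 * n)) ≤ 1 / 2 + j * (-(1 / r)) := by
      rw [← hrr]
      have : 1 / 2 + (j:ℝ) * (-(1 / r)) + ((j:ℝ) * (j + 1) / (2 * (r * r)))
          = ((j - r) ^ 2 + j) / (2 * (r * r)) := by field_simp; ring
      have h0 : 0 ≤ (((j:ℝ) - r) ^ 2 + j) / (2 * (r * r)) := by positivity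
      linarith
    calc _ ≤ Real.exp (1 / 2 + j * (-(1 / r))) := Real.exp_le_exp.2 e1
      _ = Real.exp (1 / 2) * q ^ j := by rw [Real.exp_add, hq, ← Real.exp_nat_mul]
      _ ≤ 2 * q ^ j := by
        have h2 : Real.exp (1 / 2) ≤ 2 := by
          have h3 : Real.exp (1 / 2) * Real.exp (1 / 2) = Real.exp 1 := by
            rw [← Real.exp_add]; norm_num
          have := Real.exp_one_lt_d9
          nlinarith [Real.exp_pos (1 / 2)]
        have : 0 < q := Real.exp_pos _
        gcongr
  refine (sum_le_sum b).trans ?_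
  rw [← mul_sum]
  have q0 : 0 < q := Real.exp_pos _
  have hqle : q * (r + 1) ≤ r := by
    have h1 := Real.add_one_le_exp (1 / r)
    have h2 : q * Real.exp (1 / r) = 1 := by rw [hq, ← Real.exp_add]; simp
    have h3 : q * (1 / r + 1) ≤ 1 :=
      (mul_le_mul_of_nonneg_left h1 q0.le).trans h2.le
    have : q * (r + 1) = r * (q * (1 / r + 1)) := by field_simp; ring
    rw [this]; nlinarith
  have g := geom_sum_mul_neg q t
  set G := ∑ i ∈ range t, q ^ i
  have gpos : 0 ≤ G := sum_nonneg fun i _ => by positivity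
  have : 0 < q ^ t := by positivity
  have hG : G * (1 - q) ≤ 1 := by linarith
  have h1 : 1 ≤ (1 - q) * (r + 1) := by linarith
  have : G ≤ r + 1 := by
    calc G ≤ G * ((1 - q) * (r + 1)) := le_mul_of_one_le_right gpos h1
      _ = (G * (1 - q)) * (r + 1) := by ring
      _ ≤ 1 * (r + 1) := by gcongr
      _ = r + 1 := one_mul _
  linarith

theorem cyc_sum (n t : ℕ) (hn : 0 < n) :
    ∑ a : Fin n → Fin n, ((cyc t a).card : ℝ) ≤
      Fintype.card (Fin n → Fin n) * (4 * Real.sqrt n) := by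
  classical
  have hn' : (0 : ℝ) < n := by exact_mod_cast hn
  have b : ∀ a : Fin n → Fin n, ((cyc t a).card : ℝ) ≤
      ∑ x : Fin n, ∑ j ∈ range t, if Dst x j a ∧ a^[j+1] x = x then (1:ℝ) else 0 := by
    intro a
    unfold cyc
    rw [card_filter]
    push_cast
    refine sum_le_sum fun x _ => ?_
    have hnn : ∀ j ∈ range t, (0:ℝ) ≤ if Dst x j a ∧ a^[j+1] x = x then (1:ℝ) else 0 := by
      intro j _; split_ifs <;> norm_num
    split_ifs with h
    · obtain ⟨j, hj, hd⟩ := h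
      refine le_trans ?_ (single_le_sum hnn (mem_range.2 hj))
      rw [if_pos hd]
    · exact sum_nonneg hnn
  refine (sum_le_sum fun a _ => b a).trans ?_
  rw [sum_comm]
  have c : ∀ x : Fin n, (∑ a : Fin n → Fin n, ∑ j ∈ range t,
      if Dst x j a ∧ a^[j+1] x = x then (1:ℝ) else 0) ≤
      Fintype.card (Fin n → Fin n) * (4 * Real.sqrt n) / n := by
    intro x
    rw [sum_comm, le_div_iff₀ hn', sum_mul]
    refine le_trans ?_ (mul_le_mul_of_nonneg_left (exp_sum n t hn) (Nat.cast_nonneg _))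
    rw [mul_sum]
    refine sum_le_sum fun j _ => ?_
    refine le_trans (le_of_eq ?_) (close_card x j)
    rw [card_filter]; push_cast; rfl
  refine (sum_le_sum fun x _ => c x).trans (le_of_eq ?_)
  rw [sum_const, card_univ, Fintype.card_fin, nsmul_eq_mul]
  field_simp

open Classical in
theorem badA2 (n t : ℕ) (hn : 0 < n) (s : ℝ) :
    s * ((univ.filter (fun a : Fin n → Fin n => ¬ ((cyc t a).card : ℝ) ≤ s)).card : ℝ) ≤
      Fintype.card (Fin n → Fin n) * (4 * Real.sqrt n) := by
  refine le_trans ?_ (cyc_sum n t hn)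
  rw [mul_comm, ← nsmul_eq_mul, ← sum_const]
  refine (sum_le_sum fun σ hσ => ?_).trans
    (sum_le_sum_of_subset_of_nonneg (filter_subset _ _) fun σ _ _ => Nat.cast_nonneg _)
  exact (not_le.1 (mem_filter.1 hσ).2).le

open Classical in
theorem badA1 (n t : ℕ) :
    ((univ.filter (fun a : Fin n → Fin n => ∃ z, Dst z t a)).card : ℝ) ≤
      n * (Fintype.card (Fin n → Fin n) * Real.exp (-((t:ℝ) * (t + 1) / (2 * n)))) := by
  have h : (univ.filter (fun a : Fin n → Fin n => ∃ z, Dst z t a)).card ≤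
      ∑ z : Fin n, (univ.filter (fun a : Fin n → Fin n => Dst z t a)).card := by
    refine le_trans (card_le_card ?_) card_biUnion_le
    intro a ha
    obtain ⟨z, hz⟩ := (mem_filter.1 ha).2
    simp only [mem_biUnion]
    exact ⟨z, mem_univ _, mem_filter.2 ⟨mem_univ _, hz⟩⟩
  calc ((univ.filter (fun a : Fin n → Fin n => ∃ z, Dst z t a)).card : ℝ)
      ≤ ∑ z : Fin n, ((univ.filter (fun a : Fin n → Fin n => Dst z t a)).card : ℝ) := by
        exact_mod_cast h
    _ ≤ ∑ z : Fin n, Fintype.card (Fin n → Fin n) * Real.exp (-((t:ℝ) * (t + 1) / (2 * n))) :=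
        sum_le_sum fun z _ => Dst_card z t
    _ = _ := by rw [sum_const, card_univ, Fintype.card_fin, nsmul_eq_mul]
end RA

namespace RA
open Finset

theorem iter_word {Q : Type*} (a : Q → Q) (t : ℕ) (q : Q) :
    wordAction (List.replicate t a) q = a^[t] q := by
  induction t generalizing q with
  | zero => rfl
  | succ t ih =>
    rw [Function.iterate_succ_apply, ← ih]
    rfl

theorem merge {n : ℕ} (a b c : Fin n → Fin n) (d : ℕ) (x y : Fin n) (hxy : x ≠ y)
    (ha : a x = a y)
    (hw : ∀ p q : Fin n, p ≠ q → ∃ w : List (Fin n → Fin n), (∀ f ∈ w, f = b ∨ f = c) ∧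
      w.length = d ∧ wordAction w p = x ∧ wordAction w q = y) (m : ℕ) :
    ∀ S : Finset (Fin n), S.card ≤ m + 1 → ∃ w : List (Fin n → Fin n),
      (∀ f ∈ w, f = a ∨ f = b ∨ f = c) ∧ w.length ≤ m * (d + 1) ∧
      (S.image (wordAction w)).card ≤ 1 := by
  induction m with
  | zero =>
    intro S hS
    exact ⟨[], by simp, by simp, card_image_le.trans (by simpa using hS)⟩
  | succ m ih =>
    intro S hS
    by_cases h1 : S.card ≤ 1
    · exact ⟨[], by simp, by simp, card_image_le.trans h1⟩
    obtain ⟨p, hp, q, hq, hpq⟩ := one_lt_card.1 (not_le.1 h1)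
    obtain ⟨w, w1, w2, w3, w4⟩ := hw p q hpq
    have hlt : (S.image (wordAction (w ++ [a]))).card < S.card := by
      refine lt_of_le_of_ne card_image_le fun he => hpq ?_
      refine (card_image_iff.1 he) hp hq ?_
      rw [wordAction_append, wordAction_append, w3, w4]
      exact ha
    obtain ⟨w', v1, v2, v3⟩ := ih (S.image (wordAction (w ++ [a]))) (by omega)
    refine ⟨(w ++ [a]) ++ w', ?_, ?_, ?_⟩
    · intro f hf
      simp only [List.mem_append, List.mem_singleton] at hf
      rcases hf with (hf | hf) | hf
      · exact Or.inr (w1 f hf)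
      · exact Or.inl hf
      · exact v1 f hf
    · simp only [List.length_append, List.length_singleton, w2]
      linarith
    · rw [image_image] at v3
      convert v3 using 2
      apply image_congr
      intro z _
      simp only [Function.comp, wordAction_append]

theorem sync {n : ℕ} (a b c : Fin n → Fin n) (t d : ℕ) (s : ℝ) (hs : s < n) (hs1 : 1 ≤ s)
    (hi : (((univ : Finset (Fin n)).image (a^[t])).card : ℝ) ≤ s)
    (hw : ∀ p q x y : Fin n, p ≠ q → x ≠ y → ∃ w : List (Fin n → Fin n),
      (∀ f ∈ w, f = b ∨ f = c) ∧
      w.length = d ∧ wordAction w p = x ∧ wordAction w q = y) :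
    ∃ w : List (Fin n → Fin n), (∀ f ∈ w, f = a ∨ f = b ∨ f = c) ∧
      (w.length : ℝ) ≤ t + s * (d + 1) ∧ IsSyncWord w := by
  have hinj : ¬ Function.Injective a := by
    intro h
    rw [card_image_of_injective _ (h.iterate t), card_univ, Fintype.card_fin] at hi
    linarith
  unfold Function.Injective at hinj
  push Not at hinj
  obtain ⟨x, y, ha, hxy⟩ := hinj
  obtain ⟨w, w1, w2, w3⟩ := merge a b c d x y hxy ha (fun p q h => hw p q x y h hxy)
    (((univ : Finset (Fin n)).image (a^[t])).card - 1) ((univ : Finset (Fin n)).image (a^[t]))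
    (by omega)
  refine ⟨List.replicate t a ++ w, ?_, ?_, ?_⟩
  · intro f hf
    rw [List.mem_append] at hf
    rcases hf with hf | hf
    · exact Or.inl (List.eq_of_mem_replicate hf)
    · exact w1 f hf
  · have : (w.length : ℝ) ≤ ((((univ : Finset (Fin n)).image (a^[t])).card - 1 : ℕ) : ℝ) * (d + 1) := by
      exact_mod_cast w2
    have h2 : ((((univ : Finset (Fin n)).image (a^[t])).card - 1 : ℕ) : ℝ) ≤ s := by
      refine le_trans ?_ hi
      exact_mod_cast Nat.sub_le _ _
    rw [List.length_append, List.length_replicate]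
    push_cast
    have : ((((univ : Finset (Fin n)).image (a^[t])).card - 1 : ℕ) : ℝ) * ((d:ℝ) + 1) ≤ s * (d + 1) := by
      gcongr
    linarith
  · refine ⟨wordAction (List.replicate t a ++ w) x, fun T => ?_⟩
    rw [wordAction_append, wordAction_append, iter_word, iter_word]
    exact card_le_one.1 w3 _ (mem_image_of_mem _ (mem_image_of_mem _ (mem_univ T))) _
      (mem_image_of_mem _ (mem_image_of_mem _ (mem_univ x)))
end RA

namespace RA
open Finset

theorem numA1 (n t : ℕ) (hn : 0 < n) (ht : 2 * Real.sqrt (n * Real.log n) ≤ t) :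
    n * Real.exp (-((t:ℝ) * (t + 1) / (2 * n))) ≤ 1 / n := by
  have hn' : (0:ℝ) < n := by exact_mod_cast hn
  have hn1 : (1:ℝ) ≤ n := by exact_mod_cast hn
  have hL : 0 ≤ Real.log n := Real.log_nonneg hn1
  have hs := Real.mul_self_sqrt (mul_nonneg hn'.le hL)
  have h0 := Real.sqrt_nonneg (n * Real.log n)
  have h1 : 4 * (n * Real.log n) ≤ t * (t + 1) := by nlinarith
  have h2 : 2 * Real.log n ≤ (t:ℝ) * (t + 1) / (2 * n) := by
    rw [le_div_iff₀ (by positivity)]; linarith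
  calc n * Real.exp (-((t:ℝ) * (t + 1) / (2 * n))) ≤ n * Real.exp (-(Real.log n) + -(Real.log n)) := by
        gcongr; linarith
    _ = n * ((n:ℝ)⁻¹ * (n:ℝ)⁻¹) := by rw [Real.exp_add, Real.exp_neg, Real.exp_log hn']
    _ = 1 / n := by field_simp

theorem clog_le (n : ℕ) (hn : 2 ≤ n) (hL : 1 ≤ Real.log n) : (Nat.clog 2 n : ℝ) ≤ 3 * Real.log n := by
  have h := Nat.pow_pred_clog_lt_self (b := 2) (by norm_num) (by omega : 1 < n)
  have hp : 0 < Nat.clog 2 n := Nat.clog_pos (by norm_num) hn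
  have h1 : ((2:ℝ) ^ (Nat.clog 2 n).pred) ≤ n := by exact_mod_cast h.le
  have h2 := Real.log_le_log (by positivity) h1
  rw [Real.log_pow] at h2
  have h3 := Real.log_two_gt_d9
  have h4 : ((Nat.clog 2 n).pred : ℝ) = Nat.clog 2 n - 1 := by
    rw [Nat.pred_eq_sub_one, Nat.cast_sub hp]; simp
  rw [h4] at h2
  have h5 : (1:ℝ) ≤ Nat.clog 2 n := by exact_mod_cast hp
  nlinarith

theorem numB (n T : ℕ) (N K : ℝ) (hn : 0 < n) (hT : 2 * T ≤ n) (hN0 : 0 ≤ N) (hN : N ≤ (n:ℝ)^2)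
    (hK : (n:ℝ)^3 ≤ K) : N / K + N * dl n T - 1 ≤ 17 * (T + 4)^6 / n := by
  have hn' : (0:ℝ) < n := by exact_mod_cast hn
  have hT' : 2 * (T:ℝ) ≤ n := by exact_mod_cast hT
  have hT0 : (0:ℝ) ≤ T := Nat.cast_nonneg _
  have hc : ((n - T : ℕ) : ℝ) = n - T := Nat.cast_sub (by omega)
  have a1 : N / K ≤ 1 / n := by
    calc N / K ≤ (n:ℝ)^2 / (n:ℝ)^3 := by gcongr
      _ = 1 / n := by field_simp
  set m : ℝ := n - T with hm
  have hmn : (n:ℝ) / 2 ≤ m := by linarith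
  have hm0 : 0 < m := by linarith
  have a2 : N * (1 / m ^ 2) ≤ 1 + 8 * T / n := by
    calc N * (1 / m^2) ≤ (n:ℝ)^2 * (1 / m^2) := by gcongr
      _ = 1 + (n^2 - m^2) / m^2 := by field_simp; ring
      _ ≤ 1 + (2 * n * T) / (n / 2)^2 := by
        have : (n:ℝ)^2 - m^2 ≤ 2 * n * T := by rw [hm]; nlinarith
        gcongr
      _ = _ := by field_simp; ring
  have a3 : N * ((T:ℝ)^3 * (T + 4)^3 / m^3) ≤ 8 * (T + 4)^6 / n := by
    calc N * ((T:ℝ)^3 * (T + 4)^3 / m^3) ≤ (n:ℝ)^2 * ((T + 4)^3 * (T + 4)^3 / (n / 2)^3) := by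
          gcongr; linarith
      _ = _ := by field_simp; ring
  unfold dl
  rw [hc, mul_add]
  have a4 : (1:ℝ) / n + 8 * T / n ≤ 9 * (T + 4)^6 / n := by
    rw [← add_div]
    gcongr
    have : (1:ℝ) * (T + 4) ≤ (T + 4)^5 * (T + 4) := by
      gcongr
      exact one_le_pow₀ (by linarith)
    nlinarith
  have a5 : 17 * ((T:ℝ) + 4)^6 / n = 9 * (T + 4)^6 / n + 8 * (T + 4)^6 / n := by ring
  linarith

theorem len_bound (n t k : ℕ) (hL : 1 ≤ Real.log n) (hn : 1 ≤ n)
    (ht : t = ⌈2 * Real.sqrt (n * Real.log n)⌉₊) (hk : (k:ℝ) ≤ 9 * Real.log n) :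
    (t:ℝ) + Real.sqrt (n * Real.log n) * ((10 * k : ℕ) + 1) ≤
      100 * Real.sqrt (n * Real.log n ^ 3) := by
  have hn1 : (1:ℝ) ≤ n := by exact_mod_cast hn
  set L := Real.log n
  set s := Real.sqrt (n * L) with hs
  have hs1 : 1 ≤ s := Real.one_le_sqrt.2 (by nlinarith)
  have e : Real.sqrt (n * L ^ 3) = s * L := by
    rw [show (n:ℝ) * L^3 = (n * L) * L^2 by ring, Real.sqrt_mul (by positivity),
      Real.sqrt_sq (by linarith)]
  have h1 : (t:ℝ) ≤ 2 * s + 1 := by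
    rw [ht]; exact (Nat.ceil_lt_add_one (by positivity)).le
  rw [e]
  push_cast
  have h2 : s * (10 * (k:ℝ) + 1) ≤ s * (90 * L + 1) :=
    mul_le_mul_of_nonneg_left (by linarith) (by linarith)
  have h3 : s ≤ s * L := le_mul_of_one_le_right (by linarith) hL
  nlinarith

end RA

namespace RA
open Finset

def Good (n : ℕ) (x : (Fin n → Fin n) × Equiv.Perm (Fin n) × Equiv.Perm (Fin n)) : Prop :=
  ∃ w : List (Fin n → Fin n),
    (∀ f ∈ w, f = x.1 ∨ f = ⇑x.2.1 ∨ f = ⇑x.2.2) ∧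
    (w.length : ℝ) ≤ 100 * Real.sqrt (n * (Real.log n) ^ 3) ∧ IsSyncWord w

def toOm {n : ℕ} (y : Equiv.Perm (Fin n) × Equiv.Perm (Fin n)) : Om n :=
  fun i => if i = true then y.1 else y.2

theorem toOm_inj {n : ℕ} : Function.Injective (toOm (n := n)) := by
  rintro ⟨a, b⟩ ⟨c, d⟩ h
  have h1 := congrFun h true
  have h2 := congrFun h false
  simp [toOm] at h1 h2
  rw [h1, h2]

theorem card_Om (n : ℕ) : Fintype.card (Om n) =
    Fintype.card (Equiv.Perm (Fin n) × Equiv.Perm (Fin n)) := by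
  simp [Om, sq]

theorem good_of {n t k : ℕ} (hn : 3 ≤ n) (hL : 1 ≤ Real.log n)
    (ht : t = ⌈2 * Real.sqrt (n * Real.log n)⌉₊) (hk : k = 3 * Nat.clog 2 n)
    (a : Fin n → Fin n) (y : Equiv.Perm (Fin n) × Equiv.Perm (Fin n))
    (h1 : ¬ ∃ z, Dst z t a) (h2 : ((cyc t a).card : ℝ) ≤ Real.sqrt (n * Real.log n))
    (h3 : SS k (toOm y) ≤ 1 / Real.sqrt n) : Good n (a, y) := by
  have hn' : (3:ℝ) ≤ n := by exact_mod_cast hn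
  have hN : 0 < Fintype.card (X n) := by
    rw [card_X, offDiag_card]; simp; omega
  have hNle : (Fintype.card (X n) : ℝ) ≤ n ^ 2 := by
    rw [card_X, offDiag_card]
    simp
    rw [Nat.cast_sub (Nat.le_mul_self n)]
    push_cast
    nlinarith
  have hNpos : (0:ℝ) < Fintype.card (X n) := by exact_mod_cast hN
  have hε : (1 / Real.sqrt n) ^ 10 < (1 / (Fintype.card (X n) : ℝ)) ^ 2 := by
    have e : (1 / Real.sqrt n) ^ 10 = 1 / (n:ℝ) ^ 5 := by
      have hs : Real.sqrt n ^ 2 = n := Real.sq_sqrt (by positivity)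
      rw [div_pow, one_pow, show Real.sqrt n ^ 10 = (Real.sqrt n ^ 2) ^ 5 by ring, hs]
    rw [e]
    calc 1 / (n:ℝ) ^ 5 < 1 / (n:ℝ) ^ 4 := by
          apply one_div_lt_one_div_of_lt (by positivity)
          apply pow_lt_pow_right₀ (by linarith) (by norm_num)
      _ = (1 / (n:ℝ) ^ 2) ^ 2 := by field_simp
      _ ≤ _ := by gcongr
  have hlog : Real.log n < n := by
    have := Real.log_le_sub_one_of_pos (show (0:ℝ) < n by linarith)
    linarith
  have hs_lt : Real.sqrt (n * Real.log n) < n := by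
    rw [Real.sqrt_lt' (by linarith)]
    nlinarith
  have hs1 : 1 ≤ Real.sqrt (n * Real.log n) := Real.one_le_sqrt.2 (by nlinarith)
  have hi : (((univ : Finset (Fin n)).image (a^[t])).card : ℝ) ≤ Real.sqrt (n * Real.log n) := by
    refine le_trans ?_ h2
    exact_mod_cast card_le_card (img_cyc t a (fun z hz => h1 ⟨z, hz⟩))
  obtain ⟨w, w1, w2, w3⟩ := sync a y.1 y.2 t (10 * k) _ hs_lt hs1 hi (by
    intro p q x z hpq hxz
    obtain ⟨w, w1, w2, w3, w4⟩ := mixing (toOm y) hN (1 / Real.sqrt n) h3 hε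
      ⟨(p, q), hpq⟩ ⟨(x, z), hxz⟩
    exact ⟨w, by simpa [toOm] using w1, w2, w3, w4⟩)
  refine ⟨w, w1, w2.trans ?_, w3⟩
  refine len_bound n t k hL (by omega) ht ?_
  have := clog_le n (by omega) hL
  rw [hk]; push_cast; linarith

open Classical in
theorem bad_count {n : ℕ} (hn : 3 ≤ n) (hL : 1 ≤ Real.log n) (h72 : 72 * Real.log n < n) :
    ((univ.filter (fun x => ¬ Good n x)).card : ℝ) ≤
      Fintype.card ((Fin n → Fin n) × Equiv.Perm (Fin n) × Equiv.Perm (Fin n)) *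
      (1 / n + 4 / Real.sqrt (Real.log n) + 17 * (40 * Real.log n) ^ 6 / Real.sqrt n) := by
  have hn' : (3:ℝ) ≤ n := by exact_mod_cast hn
  have hn0 : (0:ℝ) < n := by linarith
  set t := ⌈2 * Real.sqrt (n * Real.log n)⌉₊ with ht
  set k := 3 * Nat.clog 2 n with hk
  set A1 := univ.filter (fun a : Fin n → Fin n => ∃ z, Dst z t a) with hA1
  set A2 := univ.filter (fun a : Fin n → Fin n => ¬ ((cyc t a).card : ℝ) ≤ Real.sqrt (n * Real.log n)) with hA2
  set B := univ.filter (fun σ : Om n => ¬ SS k σ ≤ 1 / Real.sqrt n) with hB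
  set B' := univ.filter (fun y : Equiv.Perm (Fin n) × Equiv.Perm (Fin n) => ¬ SS k (toOm y) ≤ 1 / Real.sqrt n) with hB'
  have hBB : B'.card ≤ B.card := by
    refine card_le_card_of_injOn toOm ?_ toOm_inj.injOn
    intro y hy
    exact mem_filter.2 ⟨mem_univ _, (mem_filter.1 hy).2⟩
  have hsub : univ.filter (fun x => ¬ Good n x) ⊆
      (A1 ×ˢ univ) ∪ (A2 ×ˢ univ) ∪ (univ ×ˢ B') := by
    rintro ⟨a, y⟩ hx
    by_contra hc
    refine (mem_filter.1 hx).2 ?_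
    simp only [mem_union, mem_product, mem_univ, and_true, true_and, not_or, hA1, hA2, hB',
      mem_filter, not_not] at hc
    exact good_of hn hL ht hk a y hc.1.1 hc.1.2 hc.2
  set F : ℝ := (Fintype.card (Fin n → Fin n) : ℝ) with hF
  set P : ℝ := (Fintype.card (Equiv.Perm (Fin n) × Equiv.Perm (Fin n)) : ℝ) with hP
  have hc : ((univ.filter (fun x => ¬ Good n x)).card : ℝ) ≤
      A1.card * P + A2.card * P + F * B'.card := by
    have := (card_le_card hsub).trans ((card_union_le _ _).trans
      (Nat.add_le_add_right (card_union_le _ _) _))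
    simp only [card_product, card_univ] at this
    rw [hF, hP]
    exact_mod_cast this
  have hF0 : 0 ≤ F := Nat.cast_nonneg _
  have hP0 : 0 ≤ P := Nat.cast_nonneg _
  have b1 : (A1.card : ℝ) ≤ F * (1 / n) := by
    refine (badA1 n t).trans ?_
    have := numA1 n t (by omega) (Nat.le_ceil _)
    calc _ = F * (n * Real.exp (-((t:ℝ) * (t + 1) / (2 * n)))) := by rw [hF]; ring
      _ ≤ _ := by gcongr
  have hsn : 0 < Real.sqrt n := Real.sqrt_pos.2 hn0
  have hsL : 0 < Real.sqrt (Real.log n) := Real.sqrt_pos.2 (by linarith)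
  have b2 : (A2.card : ℝ) ≤ F * (4 / Real.sqrt (Real.log n)) := by
    have h := badA2 n t (by omega) (Real.sqrt (n * Real.log n))
    rw [Real.sqrt_mul hn0.le] at h
    rw [mul_div_assoc', le_div_iff₀ hsL]
    refine le_of_mul_le_mul_left ?_ hsn
    have e : (A2.card : ℝ) = ((univ.filter (fun a : Fin n → Fin n => ¬ ((cyc t a).card : ℝ) ≤ Real.sqrt n * Real.sqrt (Real.log n))).card : ℝ) := by
      rw [hA2, Real.sqrt_mul hn0.le]
    rw [e]
    linarith
  have hclog := clog_le n (by omega) hL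
  have hT40 : ((4 * k : ℕ) : ℝ) + 4 ≤ 40 * Real.log n := by
    rw [hk]; push_cast; linarith
  have hT : 2 * (4 * k) ≤ n := by
    have : ((2 * (4 * k) : ℕ) : ℝ) < n := by rw [hk]; push_cast; linarith
    exact_mod_cast this.le
  have b3 : (B'.card : ℝ) ≤ P * (17 * (40 * Real.log n) ^ 6 / Real.sqrt n) := by
    have hN : 0 < Fintype.card (X n) := by
      rw [card_X, offDiag_card]; simp; omega
    have hNle : (Fintype.card (X n) : ℝ) ≤ n ^ 2 := by
      rw [card_X, offDiag_card]
      simp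
      rw [Nat.cast_sub (Nat.le_mul_self n)]
      push_cast
      nlinarith
    have hK : (n:ℝ) ^ 3 ≤ 2 ^ k := by
      have : n ≤ 2 ^ Nat.clog 2 n := Nat.le_pow_clog (by norm_num) n
      have h2 : (n:ℝ) ≤ 2 ^ Nat.clog 2 n := by exact_mod_cast this
      calc (n:ℝ) ^ 3 ≤ (2 ^ Nat.clog 2 n) ^ 3 := by gcongr
        _ = 2 ^ k := by rw [hk, ← pow_mul, mul_comm]
    have h := badB (n := n) (k := k) (by omega) hN (1 / Real.sqrt n)
    have h4 := numB n (4 * k) (Fintype.card (X n)) (2 ^ k) (by omega) hT (by positivity) hNle hK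
    have hPB : (Fintype.card (Om n) : ℝ) = P := by rw [hP, card_Om]
    have h5 : 17 * (((4 * k : ℕ) : ℝ) + 4) ^ 6 / n ≤ 17 * (40 * Real.log n) ^ 6 / n := by gcongr
    have h6 : 1 / Real.sqrt n * (B'.card : ℝ) ≤ P * (17 * (40 * Real.log n) ^ 6 / n) := by
      calc 1 / Real.sqrt n * (B'.card : ℝ) ≤ 1 / Real.sqrt n * (B.card : ℝ) := by gcongr
        _ ≤ _ := by
          convert h using 1
        _ ≤ P * (17 * (40 * Real.log n) ^ 6 / n) := by
          rw [hPB]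
          exact mul_le_mul_of_nonneg_left (h4.trans h5) hP0
    have hss : Real.sqrt n * Real.sqrt n = n := Real.mul_self_sqrt hn0.le
    calc (B'.card : ℝ) = Real.sqrt n * (1 / Real.sqrt n * (B'.card : ℝ)) := by field_simp
      _ ≤ Real.sqrt n * (P * (17 * (40 * Real.log n) ^ 6 / n)) := by gcongr
      _ = _ := by
        generalize (17 * (40 * Real.log n) ^ 6) = W
        rw [mul_div_assoc', mul_div_assoc', mul_div_assoc', div_eq_div_iff hn0.ne' hsn.ne']
        linear_combination (P * W) * hss
  rw [Fintype.card_prod]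
  push_cast
  rw [← hF, ← hP]
  calc _ ≤ _ := hc
    _ ≤ F * (1 / n) * P + F * (4 / Real.sqrt (Real.log n)) * P +
        F * (P * (17 * (40 * Real.log n) ^ 6 / Real.sqrt n)) := by gcongr
    _ = _ := by ring

theorem err_tendsto : Filter.Tendsto (fun n : ℕ => (1:ℝ) / n + 4 / Real.sqrt (Real.log n) +
    17 * (40 * Real.log n) ^ 6 / Real.sqrt n) Filter.atTop (nhds 0) := by
  have hcast := tendsto_natCast_atTop_atTop (R := ℝ)
  have h1 : Filter.Tendsto (fun n : ℕ => (1:ℝ) / n) Filter.atTop (nhds 0) :=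
    tendsto_one_div_atTop_nhds_zero_nat
  have h2 : Filter.Tendsto (fun n : ℕ => (4:ℝ) / Real.sqrt (Real.log n)) Filter.atTop (nhds 0) :=
    Filter.Tendsto.div_atTop tendsto_const_nhds
      (Real.tendsto_sqrt_atTop.comp (Real.tendsto_log_atTop.comp hcast))
  have h3 : Filter.Tendsto (fun n : ℕ => 17 * (40 * Real.log n) ^ 6 / Real.sqrt n)
      Filter.atTop (nhds 0) := by
    have h := (isLittleO_log_rpow_rpow_atTop 6 (show (0:ℝ) < 1 / 2 by norm_num)).tendsto_div_nhds_zero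
    have h' := (h.comp hcast).const_mul (17 * 40 ^ 6)
    rw [mul_zero] at h'
    refine h'.congr fun n => ?_
    simp only [Function.comp]
    rw [Real.sqrt_eq_rpow, show (6:ℝ) = ((6:ℕ):ℝ) by norm_num, Real.rpow_natCast]
    ring
  simpa using (h1.add h2).add h3

theorem main : Filter.Tendsto (fun n : ℕ => (Nat.card {x // Good n x} : ℝ) /
      (Nat.card ((Fin n → Fin n) × Equiv.Perm (Fin n) × Equiv.Perm (Fin n)) : ℝ))
    Filter.atTop (nhds 1) := by
  classical
  have hcast := tendsto_natCast_atTop_atTop (R := ℝ)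
  have he := (tendsto_const_nhds (x := (1:ℝ))).sub err_tendsto
  rw [sub_zero] at he
  have e1 : ∀ᶠ n : ℕ in Filter.atTop, 1 ≤ Real.log n :=
    (Real.tendsto_log_atTop.comp hcast).eventually_ge_atTop 1
  have e2 : ∀ᶠ n : ℕ in Filter.atTop, 72 * Real.log n < n := by
    have := hcast.eventually (Real.isLittleO_log_id_atTop.bound (show (0:ℝ) < 1 / 73 by norm_num))
    filter_upwards [this, e1] with n h h1
    simp only [Real.norm_eq_abs, id, Nat.abs_cast] at h
    have := le_abs_self (Real.log n)
    linarith
  refine tendsto_of_tendsto_of_tendsto_of_le_of_le' he tendsto_const_nhds ?_ ?_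
  · filter_upwards [e1, e2, Filter.eventually_ge_atTop 3] with n h1 h2 h3
    have hb := bad_count h3 h1 h2
    have hsum := card_filter_add_card_filter_not
      (s := (univ : Finset ((Fin n → Fin n) × Equiv.Perm (Fin n) × Equiv.Perm (Fin n)))) (Good n)
    rw [Nat.card_eq_fintype_card, Nat.card_eq_fintype_card, Fintype.card_subtype]
    have : Nonempty (Fin n) := ⟨⟨0, by omega⟩⟩
    have hpos : (0:ℝ) < Fintype.card ((Fin n → Fin n) × Equiv.Perm (Fin n) × Equiv.Perm (Fin n)) := by
      exact_mod_cast Fintype.card_pos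
    rw [le_div_iff₀ hpos]
    have hs : ((univ.filter (Good n)).card : ℝ) + ((univ.filter (fun x => ¬ Good n x)).card : ℝ) =
        Fintype.card ((Fin n → Fin n) × Equiv.Perm (Fin n) × Equiv.Perm (Fin n)) := by
      rw [← card_univ]
      exact_mod_cast hsum
    linarith
  · refine Filter.Eventually.of_forall fun n => ?_
    apply div_le_one_of_le₀ _ (Nat.cast_nonneg _)
    rw [Nat.card_eq_fintype_card, Nat.card_eq_fintype_card]
    exact_mod_cast Fintype.card_subtype_le _
end RA

/-- There is a constant `C > 0` such that, for the automaton on `Fin n` whose three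
letters act by a uniformly random mapping `a` and two independent uniformly random
permutations `b`, `c` (all mutually independent, i.e. the triple `(a, b, c)` is
uniform on the product space), the probability that the automaton is synchronizing
with a synchronizing word of length at most `C * √(n * (log n)^3)` tends to `1` as
`n → ∞`. -/
theorem random_automaton_sqrt_reset_threshold :
    ∃ C : ℝ, 0 < C ∧
      Filter.Tendsto
        (fun n : ℕ =>
          (Nat.card {x : (Fin n → Fin n) × Equiv.Perm (Fin n) × Equiv.Perm (Fin n) //
              ∃ w : List (Fin n → Fin n),
                (∀ f ∈ w, f = x.1 ∨ f = ⇑x.2.1 ∨ f = ⇑x.2.2) ∧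
                (w.length : ℝ) ≤ C * Real.sqrt (n * (Real.log n) ^ 3) ∧
                IsSyncWord w} : ℝ) /
          (Nat.card ((Fin n → Fin n) × Equiv.Perm (Fin n) × Equiv.Perm (Fin n)) : ℝ))
        Filter.atTop (nhds 1) := by
  exact ⟨100, by norm_num, RA.main⟩
end

section
/- For every r ≥ 1 and every d ≥ 2 there exists a constant C > 0 such that the following holds. For each n, let π₁, π₂, …, π_d be d independent uniformly random permutations of Fin n. Then the probability of the following event tends to 1 as n → ∞: for every pair of r-tuples (x₁, …, x_r) and (y₁, …, y_r) of elements of Fin n, each tuple having pairwise distinct entries, there exists a finite sequence of at most C · log n permutations, each taken from {π₁, …, π_d}, whose composition maps x_i to y_i for every i = 1, …, r. -/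
/-- The action of a word (a list of permutations) on a point, applying the
permutations in order: the first element of the list acts first. -/
def permWordAction {Q : Type*} (w : List (Equiv.Perm Q)) (q : Q) : Q :=
  w.foldl (fun s σ => σ s) q

namespace RPT
open Finset

/-- cylinder -/
def cyl {n d : ℕ} (p : Fin d → Equiv.Perm (Fin n)) (E : Finset (Fin d × Fin n)) :
    Finset (Fin d → Equiv.Perm (Fin n)) :=
  univ.filter (fun π => ∀ e ∈ E, π e.1 e.2 = p e.1 e.2)

lemma cyl_empty {n d : ℕ} (p : Fin d → Equiv.Perm (Fin n)) : cyl p ∅ = univ := by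
  simp [cyl]

lemma mem_cyl {n d : ℕ} {p π : Fin d → Equiv.Perm (Fin n)} {E : Finset (Fin d × Fin n)} :
    π ∈ cyl p E ↔ ∀ e ∈ E, π e.1 e.2 = p e.1 e.2 := by
  simp [cyl]

/-- The free step lemma. -/
lemma cyl_step {n d : ℕ} (p : Fin d → Equiv.Perm (Fin n)) (E : Finset (Fin d × Fin n))
    (j : Fin d) (a : Fin n) (hE : (j, a) ∉ E) (b : Fin n) :
    ((cyl p E).filter (fun π => π j a = b)).card * (n - E.card) ≤ (cyl p E).card := by
  classical
  set R : Finset (Fin n) := (E.filter (fun e => e.1 = j)).image (fun e => p j e.2) with hR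
  have hRc : R.card ≤ E.card := card_image_le.trans (card_filter_le _ _)
  have hRn : n - E.card ≤ (Rᶜ).card := by
    rw [card_compl, Fintype.card_fin]; omega
  by_cases hb : b ∈ R
  · have : (cyl p E).filter (fun π => π j a = b) = ∅ := by
      apply filter_eq_empty_iff.2
      intro π hπ hab
      rw [hR, mem_image] at hb
      obtain ⟨⟨j', a'⟩, he, hb⟩ := hb
      rw [mem_filter] at he
      obtain ⟨he, rfl⟩ := he
      have h1 := mem_cyl.1 hπ _ he
      simp only at h1 hb
      rw [← hab, ← h1] at hb
      have := (π j').injective hb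
      subst this
      exact hE he
    rw [this]; simp
  · have key : ∀ b' ∈ Rᶜ, ((cyl p E).filter (fun π => π j a = b)).card ≤
        ((cyl p E).filter (fun π => π j a = b')).card := by
      intro b' hb'
      rw [mem_compl] at hb'
      apply card_le_card_of_injOn
        (fun π => Function.update π j (Equiv.swap b b' * π j))
      · intro π hπ
        simp only [coe_filter, Set.mem_ofPred_eq, mem_cyl] at hπ ⊢
        obtain ⟨h1, h2⟩ := hπ
        refine ⟨?_, ?_⟩
        · rintro ⟨j', a'⟩ he
          have h3 := h1 _ he
          simp only at h3 ⊢
          by_cases hj : j' = j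
          · subst hj
            simp only [Function.update_self, Equiv.Perm.mul_apply]
            rw [h3]
            have hm : p j' a' ∈ R := by
              rw [hR, mem_image]
              exact ⟨(j', a'), by simp [he], rfl⟩
            apply Equiv.swap_apply_of_ne_of_ne
            · rintro h; exact hb (h ▸ hm)
            · rintro h; exact hb' (h ▸ hm)
          · rw [Function.update_of_ne hj, h3]
        · simp [h2]
      · intro π _ π' _ h
        simp only at h
        funext i
        have h4 := congrFun h i
        by_cases hi : i = j
        · subst hi
          simpa using h4
        · simpa [Function.update_of_ne hi] using h4
    calc _ ≤ ((cyl p E).filter (fun π => π j a = b)).card * (Rᶜ).card :=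
          Nat.mul_le_mul_left _ hRn
      _ = ∑ b' ∈ Rᶜ, ((cyl p E).filter (fun π => π j a = b)).card := by
          rw [sum_const, smul_eq_mul, mul_comm]
      _ ≤ ∑ b' ∈ Rᶜ, ((cyl p E).filter (fun π => π j a = b')).card := sum_le_sum key
      _ ≤ ∑ b', ((cyl p E).filter (fun π => π j a = b')).card :=
          sum_le_univ_sum_of_nonneg (fun _ => Nat.zero_le _)
      _ = (cyl p E).card := by
          rw [← card_eq_sum_card_fiberwise]
          intro x _; simp

lemma cyl_insert {n d : ℕ} (p p1 : Fin d → Equiv.Perm (Fin n)) (E : Finset (Fin d × Fin n))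
    (j : Fin d) (a b : Fin n) (h : p1 ∈ (cyl p E).filter (fun π => π j a = b)) :
    (cyl p E).filter (fun π => π j a = b) = cyl p1 (insert (j, a) E) := by
  classical
  simp only [mem_filter, mem_cyl] at h
  ext π
  simp only [mem_filter, mem_cyl, forall_mem_insert]
  constructor
  · rintro ⟨h1, h2⟩
    exact ⟨by rw [h2, h.2], fun e he => by rw [h1 e he, h.1 e he]⟩
  · rintro ⟨h1, h2⟩
    exact ⟨fun e he => by rw [h2 e he, h.1 e he], by rw [h1, h.2]⟩

lemma cyl_card {n d : ℕ} (p : Fin d → Equiv.Perm (Fin n)) (E : Finset (Fin d × Fin n)) :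
    (cyl p E).card * n.descFactorial E.card ≤ Fintype.card (Fin d → Equiv.Perm (Fin n)) := by
  classical
  induction E using Finset.induction_on with
  | empty => simp [cyl_empty]
  | insert e E he ih =>
    obtain ⟨j, a⟩ := e
    rw [card_insert_of_notMem he, Nat.descFactorial_succ]
    have h1 := cyl_step p E j a he (p j a)
    rw [cyl_insert p p E j a (p j a) (by simp [mem_cyl])] at h1
    calc _ = ((cyl p (insert (j, a) E)).card * (n - E.card)) * n.descFactorial E.card := by ring
      _ ≤ _ := Nat.mul_le_mul_right _ h1
      _ ≤ _ := ih

/-- edges seen by an instruction list -/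
def edges {n d : ℕ} (π : Fin d → Equiv.Perm (Fin n)) : Fin n → List (Fin n ⊕ Fin d) →
    Finset (Fin d × Fin n)
  | _, [] => ∅
  | _, (Sum.inl b :: l) => edges π b l
  | a, (Sum.inr j :: l) => insert (j, a) (edges π (π j a) l)

def verts {n d : ℕ} (π : Fin d → Equiv.Perm (Fin n)) : Fin n → List (Fin n ⊕ Fin d) →
    Finset (Fin n)
  | _, [] => ∅
  | _, (Sum.inl b :: l) => verts π b l
  | a, (Sum.inr j :: l) => insert (π j a) (verts π (π j a) l)

lemma explore {n d : ℕ} (s q : ℝ) (hs : 1 ≤ s) (hq : 0 ≤ q) (B D : ℕ) (hD : D ≤ n)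
    (hB : (B : ℝ) ≤ q * ((n : ℝ) - D)) :
    ∀ (l : List (Fin n ⊕ Fin d)) (a : Fin n) (E : Finset (Fin d × Fin n)) (V : Finset (Fin n))
      (p : Fin d → Equiv.Perm (Fin n)), V.card + l.length ≤ B → E.card + l.length ≤ D →
      ∑ π ∈ cyl p E, s ^ (E ∪ edges π a l).card * s⁻¹ ^ (V ∪ verts π a l).card ≤
        (1 + s * q) ^ l.length * (s ^ E.card * s⁻¹ ^ V.card) * (cyl p E).card := by
  classical
  have hs0 : 0 < s := by linarith
  have hsi : s⁻¹ ≤ 1 := inv_le_one_of_one_le₀ hs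
  have hsi0 : 0 < s⁻¹ := by positivity
  have h1q : 1 ≤ 1 + s * q := by nlinarith [mul_nonneg hs0.le hq]
  intro l
  induction l with
  | nil =>
    intro a E V p _ _
    simp [edges, verts, mul_comm]
  | cons c l ih =>
    intro a E V p hV hE
    simp only [List.length_cons] at hV hE ⊢
    rcases c with b | j
    · simp only [edges, verts]
      refine (ih b E V p (by omega) (by omega)).trans ?_
      gcongr
      · omega
    · simp only [edges, verts, union_insert, ← insert_union]
      by_cases he : (j, a) ∈ E
      · have h1 : ∀ π ∈ cyl p E, s ^ (insert (j, a) E ∪ edges π (π j a) l).card *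
            s⁻¹ ^ (insert (π j a) V ∪ verts π (π j a) l).card =
            s ^ (E ∪ edges π (p j a) l).card *
            s⁻¹ ^ (insert (p j a) V ∪ verts π (p j a) l).card := by
          intro π hπ
          have := mem_cyl.1 hπ _ he
          simp only at this
          rw [this, insert_eq_self.2 he]
        rw [sum_congr rfl h1]
        have h3 := card_insert_le (p j a) V
        refine (ih (p j a) E (insert (p j a) V) p (by omega) (by omega)).trans ?_
        have h2 : s⁻¹ ^ (insert (p j a) V).card ≤ s⁻¹ ^ V.card :=
          pow_le_pow_of_le_one hsi0.le hsi (card_le_card (subset_insert _ _))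
        gcongr
        · omega
      · rw [← sum_fiberwise_of_maps_to (g := fun π : Fin d → Equiv.Perm (Fin n) => π j a)
          (t := univ) (fun _ _ => mem_univ _)]
        set G : ℝ := (1 + s * q) ^ l.length * (s ^ E.card * s⁻¹ ^ V.card) with hG
        have hG0 : 0 ≤ G := by positivity
        have hb : ∀ b : Fin n, ∑ π ∈ (cyl p E).filter (fun π => π j a = b),
            s ^ (insert (j, a) E ∪ edges π (π j a) l).card *
            s⁻¹ ^ (insert (π j a) V ∪ verts π (π j a) l).card ≤
            G * ((cyl p E).filter (fun π => π j a = b)).card +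
            (if b ∈ V then G * s * ((cyl p E).filter (fun π => π j a = b)).card else 0) := by
          intro b
          rcases ((cyl p E).filter (fun π => π j a = b)).eq_empty_or_nonempty with h0 | ⟨p1, hp1⟩
          · rw [h0]; simp
          · have h1 : ∀ π ∈ (cyl p E).filter (fun π => π j a = b),
                s ^ (insert (j, a) E ∪ edges π (π j a) l).card *
                s⁻¹ ^ (insert (π j a) V ∪ verts π (π j a) l).card =
                s ^ (insert (j, a) E ∪ edges π b l).card *
                s⁻¹ ^ (insert b V ∪ verts π b l).card := by
              intro π hπ
              rw [(mem_filter.1 hπ).2]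
            rw [sum_congr rfl h1, cyl_insert p p1 E j a b hp1]
            have h3 := card_insert_le b V
            have h4 := card_insert_of_notMem he
            refine (ih b (insert (j, a) E) (insert b V) p1 (by omega) (by omega)).trans ?_
            rw [h4]
            split_ifs with hbV
            · rw [insert_eq_self.2 hbV]
              rw [hG]
              have : 0 ≤ (1 + s * q) ^ l.length * (s ^ E.card * s⁻¹ ^ V.card) *
                (cyl p1 (insert (j, a) E)).card := by positivity
              rw [pow_succ]
              nlinarith
            · rw [card_insert_of_notMem hbV, hG, add_zero]
              apply le_of_eq
              rw [pow_succ, pow_succ]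
              field_simp
        refine (sum_le_sum (fun b _ => hb b)).trans ?_
        rw [sum_add_distrib, ← mul_sum, sum_ite_mem, univ_inter]
        have e1 : ∑ b, (((cyl p E).filter (fun π => π j a = b)).card : ℝ) = (cyl p E).card := by
          rw [← Nat.cast_sum, ← card_eq_sum_card_fiberwise]
          intro x _; simp
        rw [e1]
        have hnE : (0:ℝ) ≤ (n:ℝ) - E.card := by
          have : E.card ≤ n := by omega
          have : (E.card : ℝ) ≤ n := by exact_mod_cast this
          linarith
        have hnE' : (0:ℝ) < (n:ℝ) - E.card := by
          have : E.card < n := by omega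
          have : (E.card : ℝ) < n := by exact_mod_cast this
          linarith
        have e2 : ∀ b ∈ V, G * s * (((cyl p E).filter (fun π => π j a = b)).card : ℝ) ≤
            G * s * ((cyl p E).card / ((n:ℝ) - E.card)) := by
          intro b _
          have h5 := cyl_step p E j a he b
          have h6 : (((cyl p E).filter (fun π => π j a = b)).card : ℝ) * ((n:ℝ) - E.card) ≤
            (cyl p E).card := by
            rw [← Nat.cast_sub (by omega)]
            exact_mod_cast h5
          gcongr
          rwa [le_div_iff₀ hnE']
        have e3 : ∑ b ∈ V, G * s * (((cyl p E).filter (fun π => π j a = b)).card : ℝ) ≤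
            G * s * (q * (cyl p E).card) := by
          refine (sum_le_sum e2).trans ?_
          rw [sum_const, nsmul_eq_mul]
          have h7 : (V.card : ℝ) ≤ q * ((n:ℝ) - E.card) := by
            have h8 : (V.card : ℝ) ≤ B := by exact_mod_cast (by omega : V.card ≤ B)
            have h9 : (E.card : ℝ) ≤ D := by exact_mod_cast (by omega : E.card ≤ D)
            nlinarith
          have h10 : (V.card : ℝ) * ((cyl p E).card / ((n:ℝ) - E.card)) ≤
              q * (cyl p E).card := by
            rw [← mul_div_assoc, div_le_iff₀ hnE']
            have : (0:ℝ) ≤ (cyl p E).card := by positivity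
            nlinarith
          have : 0 ≤ G * s := by positivity
          nlinarith
        rw [pow_succ]
        nlinarith [e3]
end RPT
namespace RPT
open Finset

def traj {n d : ℕ} (π : Fin d → Equiv.Perm (Fin n)) (w : ℕ → Fin d) (a : Fin n) : ℕ → Fin n
  | 0 => a
  | t + 1 => π (w t) (traj π w a t)

/-- index set of the steps -/
def EE {n d r : ℕ} (π : Fin d → Equiv.Perm (Fin n)) (w : Bool → ℕ → Fin d) (k : ℕ)
    (x : Fin r → Fin n) : Finset (Fin d × Fin n) :=
  ((univ : Finset (Fin r × Bool)) ×ˢ range k).image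
    (fun z => (w z.1.2 z.2, traj π (w z.1.2) (x z.1.1) z.2))

def VV {n d r : ℕ} (π : Fin d → Equiv.Perm (Fin n)) (w : Bool → ℕ → Fin d) (k : ℕ)
    (x : Fin r → Fin n) : Finset (Fin n) :=
  ((univ : Finset (Fin r × Bool)) ×ˢ range (k + 1)).image
    (fun z => traj π (w z.1.2) (x z.1.1) z.2)

lemma mem_EE {n d r : ℕ} {π : Fin d → Equiv.Perm (Fin n)} {w : Bool → ℕ → Fin d} {k : ℕ}
    {x : Fin r → Fin n} {e : Fin d × Fin n} :
    e ∈ EE π w k x ↔ ∃ i s t, t < k ∧ e = (w s t, traj π (w s) (x i) t) := by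
  simp only [EE, mem_image, mem_product, mem_univ, true_and, mem_range, Prod.exists]
  constructor
  · rintro ⟨i, s, t, h, rfl⟩; exact ⟨i, s, t, h, rfl⟩
  · rintro ⟨i, s, t, h, rfl⟩; exact ⟨i, s, t, h, rfl⟩

lemma mem_VV {n d r : ℕ} {π : Fin d → Equiv.Perm (Fin n)} {w : Bool → ℕ → Fin d} {k : ℕ}
    {x : Fin r → Fin n} {a : Fin n} :
    a ∈ VV π w k x ↔ ∃ i s t, t ≤ k ∧ a = traj π (w s) (x i) t := by
  simp only [VV, mem_image, mem_product, mem_univ, true_and, mem_range, Prod.exists,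
    Nat.lt_succ_iff]
  constructor
  · rintro ⟨i, s, t, h, rfl⟩; exact ⟨i, s, t, h, rfl⟩
  · rintro ⟨i, s, t, h, rfl⟩; exact ⟨i, s, t, h, rfl⟩

lemma claimA {n d r k : ℕ} (π : Fin d → Equiv.Perm (Fin n)) (w : Bool → ℕ → Fin d)
    (x : Fin r → Fin n) (hx : Function.Injective x) (hk : 1 ≤ k)
    (h0 : w false 0 ≠ w true 0) (h1 : w false (k - 1) ≠ w true (k - 1))
    (hc : ∀ i, traj π (w false) (x i) k = traj π (w true) (x i) k) :
    (VV π w k x).card ≤ (EE π w k x).card ∧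
    ((EE π w k x).card ≤ (VV π w k x).card → ∀ i i' s s' t t', t ≤ k → t' ≤ k →
      traj π (w s) (x i) t = traj π (w s') (x i') t' →
      t = t' ∧ i = i' ∧ (t = 0 ∨ t = k ∨ s = s')) := by
  classical
  set E := EE π w k x with hE
  set V := VV π w k x with hV
  let ou : Fin n → Finset (Fin d × Fin n) := fun a => E.filter (fun e => e.2 = a)
  let inn : Fin n → Finset (Fin d × Fin n) := fun a => E.filter (fun e => π e.1 e.2 = a)
  have so : E.card = ∑ a ∈ V, (ou a).card := by
    apply card_eq_sum_card_fiberwise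
    intro e he
    obtain ⟨i, s, t, ht, rfl⟩ := mem_EE.1 he
    exact mem_VV.2 ⟨i, s, t, ht.le, rfl⟩
  have si : E.card = ∑ a ∈ V, (inn a).card := by
    apply card_eq_sum_card_fiberwise
    intro e he
    obtain ⟨i, s, t, ht, rfl⟩ := mem_EE.1 he
    exact mem_VV.2 ⟨i, s, t + 1, ht, rfl⟩
  have mo : ∀ i s t, t < k → (w s t, traj π (w s) (x i) t) ∈ ou (traj π (w s) (x i) t) := by
    intro i s t ht
    simp only [ou, mem_filter, and_true]
    exact mem_EE.2 ⟨i, s, t, ht, rfl⟩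
  have mi : ∀ i s t, t < k → (w s t, traj π (w s) (x i) t) ∈
      inn (traj π (w s) (x i) (t + 1)) := by
    intro i s t ht
    simp only [inn, mem_filter]
    exact ⟨mem_EE.2 ⟨i, s, t, ht, rfl⟩, rfl⟩
  have o1 : ∀ i s t, t < k → 1 ≤ (ou (traj π (w s) (x i) t)).card := fun i s t ht =>
    card_pos.2 ⟨_, mo i s t ht⟩
  have i1 : ∀ i s t, 0 < t → t ≤ k → 1 ≤ (inn (traj π (w s) (x i) t)).card := by
    intro i s t ht htk
    obtain ⟨t, rfl⟩ : ∃ u, t = u + 1 := ⟨t - 1, by omega⟩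
    exact card_pos.2 ⟨_, mi i s t htk⟩
  have o2 : ∀ i s, 2 ≤ (ou (traj π (w s) (x i) 0)).card := by
    intro i s
    have a1 := mo i false 0 (by omega)
    have a2 := mo i true 0 (by omega)
    simp only [traj] at a1 a2 ⊢
    exact one_lt_card.2 ⟨_, a1, _, a2, fun h => h0 (congrArg Prod.fst h)⟩
  have i2 : ∀ i s, 2 ≤ (inn (traj π (w s) (x i) k)).card := by
    intro i s
    have a1 := mi i false (k - 1) (by omega)
    have a2 := mi i true (k - 1) (by omega)
    rw [show k - 1 + 1 = k by omega] at a1 a2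
    have a3 : inn (traj π (w s) (x i) k) = inn (traj π (w true) (x i) k) := by
      cases s
      · rw [hc i]
      · rfl
    rw [hc i] at a1
    rw [a3]
    exact one_lt_card.2 ⟨_, a1, _, a2, fun h => h1 (congrArg Prod.fst h)⟩
  have deg : ∀ a ∈ V, 2 ≤ (ou a).card + (inn a).card := by
    intro a ha
    obtain ⟨i, s, t, ht, rfl⟩ := mem_VV.1 ha
    rcases Nat.eq_zero_or_pos t with rfl | ht0
    · have := o2 i s; omega
    · rcases ht.eq_or_lt with rfl | htk
      · have := i2 i s; omega
      · have := i1 i s t ht0 ht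
        have := o1 i s t htk
        omega
  have tot : 2 * E.card = ∑ a ∈ V, ((ou a).card + (inn a).card) := by
    rw [sum_add_distrib, ← so, ← si]; ring
  have two : ∑ a ∈ V, 2 = 2 * V.card := by rw [sum_const, smul_eq_mul, mul_comm]
  refine ⟨?_, ?_⟩
  · have := sum_le_sum deg
    omega
  intro hle
  have eq2 : ∀ a ∈ V, (ou a).card + (inn a).card = 2 := by
    have h5 : ∑ a ∈ V, 2 = ∑ a ∈ V, ((ou a).card + (inn a).card) :=
      le_antisymm (sum_le_sum deg) (by omega)
    intro a ha
    exact ((sum_eq_sum_iff_of_le deg).1 h5 a ha).symm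
  have eq2' : ∀ i s t, t ≤ k → (ou (traj π (w s) (x i) t)).card +
      (inn (traj π (w s) (x i) t)).card = 2 := fun i s t ht => eq2 _ (mem_VV.2 ⟨i, s, t, ht, rfl⟩)
  have zero : ∀ i i' s s' t t', t ≤ k → t' ≤ k →
      traj π (w s) (x i) t = traj π (w s') (x i') t' → t = 0 → t' = 0 := by
    intro i i' s s' t t' ht ht' h hz
    subst hz
    by_contra hne
    have a1 := i1 i' s' t' (by omega) ht'
    have a2 := o2 i s
    have a3 := eq2' i s 0 (by omega)
    rw [← h] at a1
    omega
  have last : ∀ i i' s s' t t', t ≤ k → t' ≤ k →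
      traj π (w s) (x i) t = traj π (w s') (x i') t' → t = k → t' = k := by
    intro i i' s s' t t' ht ht' h hz
    subst hz
    by_contra hne
    have a1 := o1 i' s' t' (by omega)
    have a2 := i2 i s
    have a3 := eq2' i s t (by omega)
    rw [← h] at a1
    omega
  have mid : ∀ t, 0 < t → t < k → ∀ i i' s s' t', 0 < t' → t' < k →
      traj π (w s) (x i) t = traj π (w s') (x i') t' → t = t' ∧ i = i' ∧ s = s' := by
    intro t
    induction t with
    | zero => intro h; omega
    | succ t ih =>
      intro _ htk i i' s s' t' ht' htk' h
      obtain ⟨t', rfl⟩ : ∃ u, t' = u + 1 := ⟨t' - 1, by omega⟩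
      have b1 := mi i s t (by omega)
      have b2 := mi i' s' t' (by omega)
      rw [← h] at b2
      have b3 : (inn (traj π (w s) (x i) (t + 1))).card ≤ 1 := by
        have := eq2' i s (t + 1) htk.le
        have := o1 i s (t + 1) htk
        omega
      have b4 := card_le_one.1 b3 _ b1 _ b2
      rw [Prod.mk.injEq] at b4
      obtain ⟨b5, b6⟩ := b4
      rcases Nat.eq_zero_or_pos t with rfl | ht0
      · have := zero _ _ _ _ _ _ (by omega) (by omega) b6 rfl
        subst this
        refine ⟨rfl, hx b6, ?_⟩
        revert b5
        cases s <;> cases s' <;> simp [h0, Ne.symm h0]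
      · have ht0' : 0 < t' := by
          rcases Nat.eq_zero_or_pos t' with h7 | h7
          · have := zero _ _ _ _ _ _ (by omega) (by omega) b6.symm h7
            omega
          · exact h7
        obtain ⟨c1, c2, c3⟩ := ih ht0 (by omega) i i' s s' t' ht0' (by omega) b6
        exact ⟨by omega, c2, c3⟩
  intro i i' s s' t t' ht ht' h
  rcases Nat.eq_zero_or_pos t with rfl | ht0
  · have := zero _ _ _ _ _ _ ht ht' h rfl
    subst this
    exact ⟨rfl, hx h, Or.inl rfl⟩
  have ht0' : 0 < t' := by
    rcases Nat.eq_zero_or_pos t' with h7 | h7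
    · have := zero _ _ _ _ _ _ ht' ht h.symm h7
      omega
    · exact h7
  rcases ht.eq_or_lt with rfl | htk
  · have := last _ _ _ _ _ _ ht ht' h rfl
    subst this
    refine ⟨rfl, ?_, Or.inr (Or.inl rfl)⟩
    have h3 : traj π (w false) (x i) t' = traj π (w false) (x i') t' := by
      have e1 : traj π (w s) (x i) t' = traj π (w false) (x i) t' := by
        cases s
        · rfl
        · rw [hc i]
      have e2 : traj π (w s') (x i') t' = traj π (w false) (x i') t' := by
        cases s'
        · rfl
        · rw [hc i']
      rw [← e1, ← e2, h]
    obtain ⟨u, rfl⟩ : ∃ u, t' = u + 1 := ⟨t' - 1, by omega⟩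
    have h4 : traj π (w false) (x i) u = traj π (w false) (x i') u := (π (w false u)).injective h3
    rcases Nat.eq_zero_or_pos u with rfl | hu
    · exact hx h4
    · exact (mid u hu (by omega) _ _ _ _ _ hu (by omega) h4).2.1
  · have htk' : t' < k := by
      rcases ht'.eq_or_lt with h7 | h7
      · have := last _ _ _ _ _ _ ht' ht h.symm h7
        omega
      · exact h7
    obtain ⟨c1, c2, c3⟩ := mid t ht0 htk i i' s s' t' ht0' htk' h
    exact ⟨c1, c2, Or.inr (Or.inr c3)⟩
end RPT
namespace RPT
open Finset

def FF {n d r : ℕ} (π : Fin d → Equiv.Perm (Fin n)) (w : Bool → ℕ → Fin d) (k : ℕ)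
    (x : Fin r → Fin n) : Fin r × (Fin (k + 1) ⊕ Fin (k - 1)) → Fin n
  | (i, Sum.inl t) => traj π (w false) (x i) t
  | (i, Sum.inr t) => traj π (w true) (x i) (t + 1)

def Closed {n d r : ℕ} (π : Fin d → Equiv.Perm (Fin n)) (w : Bool → ℕ → Fin d) (k : ℕ)
    (x : Fin r → Fin n) : Prop :=
  ∀ i, traj π (w false) (x i) k = traj π (w true) (x i) k

lemma FF_det {n d r k : ℕ} (π π' : Fin d → Equiv.Perm (Fin n)) (w : Bool → ℕ → Fin d)
    (x x' : Fin r → Fin n) (hc : Closed π w k x) (hc' : Closed π' w k x')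
    (h : FF π w k x = FF π' w k x') (i : Fin r) (s : Bool) (t : ℕ) (ht : t ≤ k) :
    traj π (w s) (x i) t = traj π' (w s) (x' i) t := by
  have hf : ∀ t, t ≤ k → traj π (w false) (x i) t = traj π' (w false) (x' i) t := by
    intro t ht
    exact congrFun h (i, Sum.inl ⟨t, by omega⟩)
  cases s
  · exact hf t ht
  · rcases Nat.eq_zero_or_pos t with rfl | h0
    · exact hf 0 ht
    · rcases ht.eq_or_lt with rfl | h1
      · rw [← hc i, ← hc' i]; exact hf _ le_rfl
      · have := congrFun h (i, Sum.inr ⟨t - 1, by omega⟩)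
        simp only [FF] at this
        rwa [show t - 1 + 1 = t by omega] at this

open Classical in
lemma main_count {n d r k : ℕ} (w : Bool → ℕ → Fin d) (hk : 1 ≤ k)
    (h0 : w false 0 ≠ w true 0) (h1 : w false (k - 1) ≠ w true (k - 1)) (hn : 2 * k * r ≤ n) :
    ((univ : Finset ((Fin d → Equiv.Perm (Fin n)) × (Fin r ↪ Fin n))).filter (fun z =>
      Closed z.1 w k z.2 ∧ (EE z.1 w k z.2).card ≤ (VV z.1 w k z.2).card)).card ≤
      Fintype.card (Fin d → Equiv.Perm (Fin n)) := by
  set S := (univ : Finset ((Fin d → Equiv.Perm (Fin n)) × (Fin r ↪ Fin n))).filter (fun z =>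
      Closed z.1 w k z.2 ∧ (EE z.1 w k z.2).card ≤ (VV z.1 w k z.2).card) with hS
  set T := Fintype.card (Fin d → Equiv.Perm (Fin n))
  let P := Fin r × (Fin (k + 1) ⊕ Fin (k - 1))
  have hP : Fintype.card P = 2 * k * r := by
    simp only [P, Fintype.card_prod, Fintype.card_sum, Fintype.card_fin]
    rw [show k + 1 + (k - 1) = 2 * k by omega, mul_comm]
  let I : Finset (P → Fin n) := univ.filter (fun f => Function.Injective f)
  have hI : I.card = n.descFactorial (2 * k * r) := by
    rw [← Fintype.card_subtype, Fintype.card_congr (Equiv.subtypeInjectiveEquivEmbedding P (Fin n)),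
      Fintype.card_embedding_eq, hP, Fintype.card_fin]
  have hmem : ∀ z ∈ S, Closed z.1 w k z.2 ∧ (EE z.1 w k z.2).card ≤ (VV z.1 w k z.2).card := by
    intro z hz; simpa [hS] using hz
  have hinj : ∀ z ∈ S, Function.Injective (FF z.1 w k z.2) := by
    rintro ⟨π, x⟩ hz
    obtain ⟨hc, hle⟩ := hmem _ hz
    have key := (claimA π w x x.injective hk h0 h1 hc).2 hle
    rintro ⟨i, t | t⟩ ⟨i', t' | t'⟩ h <;> simp only [FF] at h
    · obtain ⟨c1, c2, _⟩ := key _ _ _ _ _ _ (by omega) (by omega) h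
      rw [c2, Fin.ext c1]
    · obtain ⟨c1, c2, c3⟩ := key _ _ _ _ _ _ (by omega) (by omega) h
      exfalso
      rcases c3 with c3 | c3 | c3
      · omega
      · omega
      · simp at c3
    · obtain ⟨c1, c2, c3⟩ := key _ _ _ _ _ _ (by omega) (by omega) h
      exfalso
      rcases c3 with c3 | c3 | c3
      · omega
      · omega
      · simp at c3
    · obtain ⟨c1, c2, _⟩ := key _ _ _ _ _ _ (by omega) (by omega) h
      rw [c2, Fin.ext (by omega : (t : ℕ) = t')]
  have hfib : ∀ f ∈ I, (S.filter (fun z => FF z.1 w k z.2 = f)).card *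
      n.descFactorial (2 * k * r) ≤ T := by
    intro f hf
    have hf : Function.Injective f := by simpa [I] using hf
    rcases (S.filter (fun z => FF z.1 w k z.2 = f)).eq_empty_or_nonempty with h | ⟨⟨p, y⟩, hz⟩
    · rw [h]; simp
    · obtain ⟨hz, hFf⟩ := mem_filter.1 hz
      obtain ⟨hcp, hle⟩ := hmem _ hz
      simp only at hFf hcp hle
      have hEc : 2 * k * r ≤ (EE p w k y).card := by
        refine le_trans ?_ (claimA p w y y.injective hk h0 h1 hcp).1
        rw [← hP, ← card_univ, ← card_image_of_injective univ hf]
        apply card_le_card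
        intro a ha
        obtain ⟨⟨i, t | t⟩, _, rfl⟩ := mem_image.1 ha
        · rw [← hFf]
          exact mem_VV.2 ⟨i, false, t, by omega, rfl⟩
        · rw [← hFf]
          exact mem_VV.2 ⟨i, true, t + 1, by omega, rfl⟩
      obtain ⟨E', hE', hE'c⟩ := exists_subset_card_eq hEc
      have hsub : (S.filter (fun z => FF z.1 w k z.2 = f)).card ≤ (cyl p E').card := by
        apply card_le_card_of_injOn Prod.fst
        · rintro ⟨π, x⟩ hπ
          obtain ⟨hπ, hπf⟩ := mem_filter.1 hπ
          obtain ⟨hcπ, _⟩ := hmem _ hπ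
          simp only at hcπ hπf
          refine mem_cyl.2 ?_
          intro e he
          obtain ⟨i, s, t, ht, rfl⟩ := mem_EE.1 (hE' he)
          have d1 := FF_det π p w x y hcπ hcp (hπf.trans hFf.symm) i s t ht.le
          have d2 := FF_det π p w x y hcπ hcp (hπf.trans hFf.symm) i s (t + 1) ht
          simp only [traj] at d2
          rw [d1] at d2
          exact d2
        · rintro ⟨π, x⟩ hπ ⟨π', x'⟩ hπ' h
          obtain ⟨hπ, hπf⟩ := mem_filter.1 hπ
          obtain ⟨hπ', hπf'⟩ := mem_filter.1 hπ'
          simp only at h hπf hπf'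
          subst h
          have : x = x' := by
            ext i
            have := FF_det π π w x x' (hmem _ hπ).1 (hmem _ hπ').1 (hπf.trans hπf'.symm) i false 0
              (by omega)
            simp only [traj] at this
            rw [this]
          rw [this]
      calc _ ≤ (cyl p E').card * n.descFactorial (2 * k * r) := Nat.mul_le_mul_right _ hsub
        _ = (cyl p E').card * n.descFactorial E'.card := by rw [hE'c]
        _ ≤ _ := cyl_card p E'
  have hsum : S.card = ∑ f ∈ I, (S.filter (fun z => FF z.1 w k z.2 = f)).card := by
    apply card_eq_sum_card_fiberwise
    intro z hz
    simpa [I] using hinj z hz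
  have hpos : 0 < n.descFactorial (2 * k * r) := Nat.descFactorial_pos.2 hn
  have : S.card * n.descFactorial (2 * k * r) ≤ T * n.descFactorial (2 * k * r) := by
    rw [hsum, sum_mul]
    refine (sum_le_sum hfib).trans ?_
    rw [sum_const, hI, smul_eq_mul, mul_comm]
  exact Nat.le_of_mul_le_mul_right this hpos

lemma seg_edges {n d : ℕ} (π : Fin d → Equiv.Perm (Fin n)) (w : ℕ → Fin d) (a : Fin n)
    (rest : List (Fin n ⊕ Fin d)) : ∀ m t0,
    (∀ t, t0 ≤ t → t < t0 + m → (w t, traj π w a t) ∈ edges π (traj π w a t0)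
      ((List.range' t0 m).map (fun t => Sum.inr (w t)) ++ rest)) ∧
    edges π (traj π w a (t0 + m)) rest ⊆ edges π (traj π w a t0)
      ((List.range' t0 m).map (fun t => Sum.inr (w t)) ++ rest) := by
  intro m
  induction m with
  | zero => intro t0; refine ⟨fun t h1 h2 => by omega, by simp⟩
  | succ m ih =>
    intro t0
    simp only [List.range'_succ, List.map_cons, List.cons_append, edges]
    obtain ⟨i1, i2⟩ := ih (t0 + 1)
    refine ⟨?_, ?_⟩
    · intro t h1 h2
      rcases h1.eq_or_lt with rfl | h3
      · exact mem_insert_self _ _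
      · exact mem_insert_of_mem (i1 t h3 (by omega))
    · rw [show t0 + (m + 1) = t0 + 1 + m by ring]
      exact i2.trans (subset_insert _ _)

lemma seg_verts {n d : ℕ} (π : Fin d → Equiv.Perm (Fin n)) (w : ℕ → Fin d) (a : Fin n)
    (rest : List (Fin n ⊕ Fin d)) (v : Fin n) : ∀ m t0, v ∈ verts π (traj π w a t0)
      ((List.range' t0 m).map (fun t => Sum.inr (w t)) ++ rest) →
    (∃ t, t ≤ t0 + m ∧ v = traj π w a t) ∨ v ∈ verts π (traj π w a (t0 + m)) rest := by
  intro m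
  induction m with
  | zero => intro t0 h; right; simpa using h
  | succ m ih =>
    intro t0
    simp only [List.range'_succ, List.map_cons, List.cons_append, verts, mem_insert]
    rintro (h | h)
    · exact Or.inl ⟨t0 + 1, by omega, h⟩
    · rw [show t0 + (m + 1) = t0 + 1 + m by ring]
      exact ih (t0 + 1) h

def instr {n d r : ℕ} (w : Bool → ℕ → Fin d) (k : ℕ) (x : Fin r → Fin n)
    (l : List (Fin r × Bool)) : List (Fin n ⊕ Fin d) :=
  l.flatMap (fun z => Sum.inl (x z.1) :: (List.range' 0 k).map (fun t => Sum.inr (w z.2 t)))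

lemma instr_length {n d r : ℕ} (w : Bool → ℕ → Fin d) (k : ℕ) (x : Fin r → Fin n)
    (l : List (Fin r × Bool)) : (instr w k x l).length = l.length * (k + 1) := by
  induction l with
  | nil => simp [instr]
  | cons z l ih =>
    simp only [instr, List.flatMap_cons, List.length_append, List.length_cons, List.length_map,
      List.length_range'] at ih ⊢
    rw [ih]; ring

lemma instr_edges {n d r : ℕ} (π : Fin d → Equiv.Perm (Fin n)) (w : Bool → ℕ → Fin d) (k : ℕ)
    (x : Fin r → Fin n) (l : List (Fin r × Bool)) : ∀ a, ∀ z ∈ l, ∀ t, t < k →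
      (w z.2 t, traj π (w z.2) (x z.1) t) ∈ edges π a (instr w k x l) := by
  induction l with
  | nil => intro a z hz; simp at hz
  | cons y l ih =>
    intro a z hz t ht
    simp only [instr, List.flatMap_cons, List.cons_append, edges] at ih ⊢
    obtain ⟨i1, i2⟩ := seg_edges π (w y.2) (x y.1) (instr w k x l) k 0
    rcases List.mem_cons.1 hz with rfl | hz
    · exact i1 t (by omega) (by omega)
    · exact i2 (ih _ z hz t ht)

lemma instr_verts {n d r : ℕ} (π : Fin d → Equiv.Perm (Fin n)) (w : Bool → ℕ → Fin d) (k : ℕ)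
    (x : Fin r → Fin n) (v : Fin n) (l : List (Fin r × Bool)) : ∀ a,
      v ∈ verts π a (instr w k x l) → ∃ i s t, t ≤ k ∧ v = traj π (w s) (x i) t := by
  induction l with
  | nil => intro a hz; simp [instr, verts] at hz
  | cons y l ih =>
    intro a hv
    simp only [instr, List.flatMap_cons, List.cons_append, verts] at ih hv
    rcases seg_verts π (w y.2) (x y.1) (instr w k x l) v k 0 hv with ⟨t, ht, h⟩ | h
    · exact ⟨y.1, y.2, t, by omega, h⟩
    · exact ih _ h

open Classical in
lemma tail_count {n d r k K : ℕ} (w : Bool → ℕ → Fin d) (hr : 1 ≤ r) (hkK : k ≤ K)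
    (hn : 4 * (2 * r * (K + 1)) ^ 2 ≤ n) (x : Fin r ↪ Fin n) :
    ((univ.filter (fun π : Fin d → Equiv.Perm (Fin n) =>
      (VV π w k x).card + 1 ≤ (EE π w k x).card)).card : ℝ) ≤
      3 * (4 * (2 * r * (K + 1)) ^ 2 / n) ^ (r + 1) *
        Fintype.card (Fin d → Equiv.Perm (Fin n)) := by
  set T := Fintype.card (Fin d → Equiv.Perm (Fin n))
  obtain ⟨Λ, hΛ⟩ : ∃ Λ : ℕ, Λ = 2 * r * (K + 1) := ⟨_, rfl⟩
  have hΛr : ((2 * r * (K + 1) : ℝ)) = Λ := by rw [hΛ]; push_cast; ring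
  rw [hΛr]
  rw [← hΛ] at hn
  have hΛ1 : 2 * r ≤ Λ := by rw [hΛ]; nlinarith
  have hΛ0 : (1:ℝ) ≤ Λ := by exact_mod_cast (by omega : 1 ≤ Λ)
  have hnR : 4 * (Λ:ℝ) ^ 2 ≤ n := by exact_mod_cast hn
  have hn0 : (0:ℝ) < n := by nlinarith
  set s : ℝ := n / (4 * (Λ:ℝ) ^ 2) with hs
  set q : ℝ := 4 * Λ / n with hq
  have hs1 : 1 ≤ s := by rw [hs, one_le_div (by positivity)]; exact hnR
  have hs0 : 0 < s := by linarith
  have hsq : s * q = 1 / Λ := by rw [hs, hq]; field_simp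
  have hΛn : Λ ≤ n := by nlinarith
  have hB : ((2 * Λ : ℕ) : ℝ) ≤ q * ((n:ℝ) - Λ) := by
    rw [hq, div_mul_eq_mul_div, le_div_iff₀ hn0]
    push_cast
    nlinarith
  let l := (univ : Finset (Fin r × Bool)).toList
  have hl : l.length = 2 * r := by simp [l, mul_comm]
  have hlen : (instr w k x l).length ≤ Λ := by
    rw [instr_length, hl, hΛ]
    gcongr
  let V0 : Finset (Fin n) := univ.image x
  have hV0 : V0.card = r := by
    rw [card_image_of_injective _ x.injective]; simp
  have a0 : Fin n := x ⟨0, hr⟩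
  have ex := explore (n := n) (d := d) s q hs1 (by positivity) (2 * Λ) Λ hΛn hB (instr w k x l) a0 ∅
    V0 (fun _ => 1) (by omega) (by simpa using hlen)
  rw [cyl_empty] at ex
  simp only [empty_union, card_empty, pow_zero, one_mul, hV0, hsq, card_univ] at ex
  have lower : ((univ.filter (fun π : Fin d → Equiv.Perm (Fin n) =>
      (VV π w k x).card + 1 ≤ (EE π w k x).card)).card : ℝ) * s ≤
      ∑ π : Fin d → Equiv.Perm (Fin n), s ^ (edges π a0 (instr w k x l)).card *
        s⁻¹ ^ (V0 ∪ verts π a0 (instr w k x l)).card := by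
    rw [← nsmul_eq_mul]
    refine (card_nsmul_le_sum (univ.filter (fun π : Fin d → Equiv.Perm (Fin n) =>
      (VV π w k x).card + 1 ≤ (EE π w k x).card))
      (fun π => s ^ (edges π a0 (instr w k x l)).card *
        s⁻¹ ^ (V0 ∪ verts π a0 (instr w k x l)).card) s ?_).trans ?_
    · intro π hπ
      have hπ := (mem_filter.1 hπ).2
      have c1 : EE π w k x ⊆ edges π a0 (instr w k x l) := by
        intro e he
        obtain ⟨i, s, t, ht, rfl⟩ := mem_EE.1 he
        exact instr_edges π w k x l a0 (i, s) (by simp [l]) t ht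
      have c2 : V0 ∪ verts π a0 (instr w k x l) ⊆ VV π w k x := by
        intro v hv
        rcases mem_union.1 hv with hv | hv
        · obtain ⟨i, _, rfl⟩ := mem_image.1 hv
          exact mem_VV.2 ⟨i, false, 0, by omega, rfl⟩
        · exact mem_VV.2 (instr_verts π w k x v l a0 hv)
      have c3 := card_le_card c1
      have c4 := card_le_card c2
      rw [inv_pow, ← div_eq_mul_inv, le_div_iff₀ (by positivity), mul_comm, ← pow_succ]
      exact pow_le_pow_right₀ hs1 (by omega)
    · exact sum_le_sum_of_subset_of_nonneg (subset_univ _) (fun _ _ _ => by positivity)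
  have e3 : (1 + 1 / (Λ:ℝ)) ^ (instr w k x l).length ≤ 3 := by
    calc (1 + 1 / (Λ:ℝ)) ^ (instr w k x l).length ≤ (1 + 1 / (Λ:ℝ)) ^ Λ := by
          apply pow_le_pow_right₀ _ hlen
          have : 0 ≤ 1 / (Λ:ℝ) := by positivity
          linarith
      _ ≤ (Real.exp (1 / (Λ:ℝ))) ^ Λ := by
          gcongr
          rw [add_comm]; exact Real.add_one_le_exp _
      _ = Real.exp 1 := by
          rw [← Real.exp_nat_mul]; congr 1; field_simp
      _ ≤ 3 := by linarith [Real.exp_one_lt_d9]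
  have hsinv : 4 * (Λ:ℝ) ^ 2 / n = s⁻¹ := by rw [hs, inv_div]
  rw [hsinv, pow_succ]
  have e4 := lower.trans ex
  have e5 : ((univ.filter (fun π : Fin d → Equiv.Perm (Fin n) =>
      (VV π w k x).card + 1 ≤ (EE π w k x).card)).card : ℝ) * s ≤ 3 * s⁻¹ ^ r * T := by
    refine e4.trans ?_
    gcongr
  rw [← le_div_iff₀ hs0] at e5
  refine e5.trans (le_of_eq ?_)
  rw [div_eq_mul_inv]; ring

open Classical in
lemma pair_bound {n d r k K : ℕ} (w : Bool → ℕ → Fin d) (hr : 1 ≤ r) (hk : 1 ≤ k) (hkK : k ≤ K)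
    (h0 : w false 0 ≠ w true 0) (h1 : w false (k - 1) ≠ w true (k - 1))
    (hn : 4 * (2 * r * (K + 1)) ^ 2 ≤ n) :
    ∑ π : Fin d → Equiv.Perm (Fin n),
      ((univ.filter (fun x : Fin r ↪ Fin n => Closed π w k x)).card : ℝ) ≤
      (1 + 3 * (4 * (2 * r * (K + 1)) ^ 2) ^ (r + 1) / n) *
        Fintype.card (Fin d → Equiv.Perm (Fin n)) := by
  set T := Fintype.card (Fin d → Equiv.Perm (Fin n))
  have hn0 : (0:ℝ) < n := by
    have : 0 < 4 * (2 * r * (K + 1)) ^ 2 := by positivity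
    exact_mod_cast lt_of_lt_of_le this hn
  have hΛ : 2 * k * r ≤ n := by
    have : 2 * k * r ≤ 2 * r * (K + 1) := by nlinarith
    nlinarith
  have A : ∑ π : Fin d → Equiv.Perm (Fin n),
      ((univ.filter (fun x : Fin r ↪ Fin n => Closed π w k x ∧
        (EE π w k x).card ≤ (VV π w k x).card)).card : ℝ) ≤ T := by
    have := main_count (r := r) w hk h0 h1 hΛ
    refine le_trans (le_of_eq ?_) (Nat.cast_le.2 this)
    rw [← Nat.cast_sum]
    congr 1
    simp only [card_filter]
    rw [← univ_product_univ, sum_product]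
  have Bd : ∑ π : Fin d → Equiv.Perm (Fin n),
      ((univ.filter (fun x : Fin r ↪ Fin n => 
        (VV π w k x).card + 1 ≤ (EE π w k x).card)).card : ℝ) ≤
        3 * (4 * (2 * r * (K + 1)) ^ 2) ^ (r + 1) / n * T := by
    have e : ∑ π : Fin d → Equiv.Perm (Fin n),
      ((univ.filter (fun x : Fin r ↪ Fin n => 
        (VV π w k x).card + 1 ≤ (EE π w k x).card)).card : ℝ) =
        ∑ x : Fin r ↪ Fin n, ((univ.filter (fun π : Fin d → Equiv.Perm (Fin n) => 
        (VV π w k x).card + 1 ≤ (EE π w k x).card)).card : ℝ) := by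
      rw [← Nat.cast_sum, ← Nat.cast_sum]
      congr 1
      simp only [card_filter]
      rw [sum_comm]
    rw [e]
    refine (sum_le_sum (fun x _ => tail_count (k := k) w hr hkK hn x)).trans ?_
    rw [sum_const, nsmul_eq_mul, card_univ, Fintype.card_embedding_eq, Fintype.card_fin,
      Fintype.card_fin]
    have : ((n.descFactorial r : ℕ) : ℝ) ≤ (n:ℝ) ^ r := by
      exact_mod_cast Nat.descFactorial_le_pow n r
    refine (mul_le_mul_of_nonneg_right this (by positivity)).trans (le_of_eq ?_)
    rw [div_pow, pow_succ (n:ℝ)]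
    field_simp
    rfl
  calc _ ≤ ∑ π : Fin d → Equiv.Perm (Fin n),
      (((univ.filter (fun x : Fin r ↪ Fin n => Closed π w k x ∧
        (EE π w k x).card ≤ (VV π w k x).card)).card : ℝ) +
      ((univ.filter (fun x : Fin r ↪ Fin n => 
        (VV π w k x).card + 1 ≤ (EE π w k x).card)).card : ℝ)) := by
        apply sum_le_sum
        intro π _
        rw [← Nat.cast_add]
        apply Nat.cast_le.2
        refine le_trans (card_le_card ?_) (card_union_le _ _)
        intro x hx
        simp only [mem_filter, mem_union, mem_univ, true_and] at hx ⊢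
        by_cases h : (EE π w k x).card ≤ (VV π w k x).card
        · exact Or.inl ⟨hx, h⟩
        · right; omega
    _ ≤ _ := by
        rw [sum_add_distrib, add_mul, one_mul]
        exact add_le_add A Bd
end RPT
namespace RPT
open Finset

def wp {n d : ℕ} (π : Fin d → Equiv.Perm (Fin n)) : List (Fin d) → Equiv.Perm (Fin n)
  | [] => 1
  | j :: l => wp π l * π j

lemma wp_append {n d : ℕ} (π : Fin d → Equiv.Perm (Fin n)) (l m : List (Fin d)) :
    wp π (l ++ m) = wp π m * wp π l := by
  induction l with
  | nil => simp [wp]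
  | cons j l ih => simp only [List.cons_append, wp, ih, mul_assoc]

lemma wp_action {n d : ℕ} (π : Fin d → Equiv.Perm (Fin n)) (l : List (Fin d)) (a : Fin n) :
    permWordAction (l.map π) a = wp π l a := by
  induction l generalizing a with
  | nil => simp [wp, permWordAction]
  | cons j l ih =>
    simp only [permWordAction, List.map_cons, List.foldl_cons, wp, Equiv.Perm.mul_apply] at ih ⊢
    exact ih _

lemma traj_wp {n d : ℕ} (π : Fin d → Equiv.Perm (Fin n)) (w : ℕ → Fin d) (a : Fin n) (t : ℕ) :
    traj π w a t = wp π ((List.range t).map w) a := by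
  induction t with
  | zero => simp [traj, wp]
  | succ t ih => simp [traj, List.range_succ, wp_append, wp, ih]

lemma traj_getD {n d : ℕ} (π : Fin d → Equiv.Perm (Fin n)) (l : List (Fin d)) (j0 : Fin d)
    (a : Fin n) : traj π (fun t => l.getD t j0) a l.length = wp π l a := by
  rw [traj_wp]
  congr 2
  apply List.ext_getElem
  · simp
  · intro i h1 h2
    simp [h2]

open Classical in
lemma word_bound {n d r K : ℕ} (hr : 1 ≤ r) (hn : 4 * (2 * r * (K + 1)) ^ 2 ≤ n) :
    ∀ m, m ≤ K → ∀ u v : List (Fin d), u.length = m → v.length = m → u ≠ v →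
    ∑ π : Fin d → Equiv.Perm (Fin n),
      ((univ.filter (fun x : Fin r ↪ Fin n => ∀ i, wp π u (x i) = wp π v (x i))).card : ℝ) ≤
      (1 + 3 * (4 * (2 * r * (K + 1)) ^ 2) ^ (r + 1) / n) *
        Fintype.card (Fin d → Equiv.Perm (Fin n)) := by
  intro m
  induction m with
  | zero =>
    intro _ u v hu hv huv
    rw [List.length_eq_zero_iff] at hu hv
    exact absurd (hu.trans hv.symm) huv
  | succ m ih =>
    intro hmK u v hu hv huv
    obtain ⟨a, u1, rfl⟩ := List.exists_cons_of_length_eq_add_one hu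
    obtain ⟨b, v1, rfl⟩ := List.exists_cons_of_length_eq_add_one hv
    by_cases hab : a = b
    · subst hab
      refine le_trans (le_of_eq ?_) (ih (by omega) u1 v1 (by simpa using hu) (by simpa using hv)
        (by simpa using huv))
      apply sum_congr rfl
      intro π _
      congr 1
      refine card_bij' (fun x _ => x.trans (π a).toEmbedding)
        (fun x _ => x.trans (π a).symm.toEmbedding) ?_ ?_ ?_ ?_
      · intro x hx
        refine mem_filter.2 ⟨mem_univ _, fun i => ?_⟩
        simpa [wp] using (mem_filter.1 hx).2 i
      · intro x hx
        refine mem_filter.2 ⟨mem_univ _, fun i => ?_⟩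
        simpa [wp] using (mem_filter.1 hx).2 i
      · intro x _; ext i; simp
      · intro x _; ext i; simp
    · obtain ⟨u2, c, h2⟩ : ∃ u2 c, a :: u1 = u2 ++ [c] :=
        ⟨_, _, (List.dropLast_append_getLast (List.cons_ne_nil a u1)).symm⟩
      obtain ⟨v2, e, h3⟩ : ∃ v2 e, b :: v1 = v2 ++ [e] :=
        ⟨_, _, (List.dropLast_append_getLast (List.cons_ne_nil b v1)).symm⟩
      by_cases hce : c = e
      · subst hce
        rw [h2] at hu huv ⊢
        rw [h3] at hv huv ⊢
        refine le_trans (le_of_eq ?_) (ih (by omega) u2 v2 (by simpa using hu) (by simpa using hv)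
          (by simpa using huv))
        apply sum_congr rfl
        intro π _
        congr 2
        ext x
        simp [wp_append, wp]
      · let w : Bool → ℕ → Fin d := fun s t => if s then (b :: v1).getD t a else (a :: u1).getD t a
        have hw0 : w false 0 ≠ w true 0 := by simpa [w] using hab
        have hw1 : w false (m + 1 - 1) ≠ w true (m + 1 - 1) := by
          simp only [w, h2, h3]
          rw [h2] at hu
          rw [h3] at hv
          simp only [List.length_append, List.length_singleton] at hu hv
          have e1 : m = u2.length := by omega
          have e2 : m = v2.length := by omega
          have f1 : (u2 ++ [c]).getD m a = c := by rw [e1]; simp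
          have f2 : (v2 ++ [e]).getD m a = e := by rw [e2]; simp
          simp only [Nat.add_sub_cancel, f1, f2]
          simpa using hce
        refine le_trans (le_of_eq ?_) (pair_bound w hr (by omega) hmK hw0 hw1 hn)
        apply sum_congr rfl
        intro π _
        refine congrArg _ (congrArg card (filter_congr fun x _ => ?_))
        unfold Closed
        have g1 : ∀ i, traj π (w false) (x i) (m + 1) = wp π (a :: u1) (x i) := by
          intro i
          rw [← traj_getD π (a :: u1) a (x i), hu]
          rfl
        have g2 : ∀ i, traj π (w true) (x i) (m + 1) = wp π (b :: v1) (x i) := by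
          intro i
          rw [← traj_getD π (b :: v1) a (x i), hv]
          rfl
        simp only [g1, g2]

section mat
set_option linter.unusedSectionVars false
variable {X Ω : Type} [Fintype X] [Fintype Ω] [DecidableEq X]

noncomputable def Q (φ : Ω → Equiv.Perm X) : Matrix X X ℝ :=
  fun x y => (∑ f, if φ f x = y then (1:ℝ) else 0) / Fintype.card Ω

noncomputable def J (X : Type) [Fintype X] : Matrix X X ℝ := fun _ _ => 1 / (Fintype.card X : ℝ)

lemma Q_row [Nonempty Ω] (φ : Ω → Equiv.Perm X) (x : X) : ∑ y, Q φ x y = 1 := by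
  simp only [Q]
  rw [← sum_div, sum_comm]
  simp

lemma Q_col [Nonempty Ω] (φ : Ω → Equiv.Perm X) (y : X) : ∑ x, Q φ x y = 1 := by
  simp only [Q]
  rw [← sum_div, sum_comm]
  have : ∀ f, ∑ x, (if φ f x = y then (1:ℝ) else 0) = 1 := by
    intro f
    rw [Equiv.sum_comp (φ f) (fun z => if z = y then (1:ℝ) else 0)]
    simp
  simp [this]

lemma Q_sq (φ : Ω → Equiv.Perm X) [Nonempty Ω] : ∑ x, ∑ y, (Q φ x y) ^ 2 =
    (∑ f, ∑ g, ((univ.filter (fun x => φ f x = φ g x)).card : ℝ)) / (Fintype.card Ω : ℝ) ^ 2 := by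
  simp only [Q, div_pow]
  simp only [← sum_div]
  congr 1
  have : ∀ x, ∑ y, (∑ f, if φ f x = y then (1:ℝ) else 0) ^ 2 =
      ∑ f, ∑ g, if φ f x = φ g x then (1:ℝ) else 0 := by
    intro x
    simp only [sq, sum_mul_sum]
    rw [sum_comm]
    apply sum_congr rfl
    intro f _
    rw [sum_comm]
    apply sum_congr rfl
    intro g _
    simp [eq_comm]
  simp only [this]
  rw [sum_comm]
  apply sum_congr rfl
  intro f _
  rw [sum_comm]
  apply sum_congr rfl
  intro g _
  simp

lemma Q_var [Nonempty Ω] [Nonempty X] (φ : Ω → Equiv.Perm X) :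
    ∑ x, ∑ y, ((Q φ - J X) x y) ^ 2 = ∑ x, ∑ y, (Q φ x y) ^ 2 - 1 := by
  have hN : (Fintype.card X : ℝ) ≠ 0 := by simp
  have : ∀ x, ∑ y, ((Q φ - J X) x y) ^ 2 = ∑ y, (Q φ x y) ^ 2 - 1 / Fintype.card X := by
    intro x
    simp only [Matrix.sub_apply, J, sub_sq, sum_add_distrib, sum_sub_distrib]
    rw [← sum_mul, ← mul_sum, Q_row]
    simp only [sum_const, card_univ, nsmul_eq_mul]
    field_simp
    ring
  simp only [this, sum_sub_distrib, sum_const, card_univ, nsmul_eq_mul]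
  field_simp

lemma Q_pow_J [Nonempty Ω] (φ : Ω → Equiv.Perm X) : Q φ * J X = J X := by
  ext x y
  simp only [Matrix.mul_apply, J]
  rw [← sum_mul, Q_row, one_mul]

lemma J_Q [Nonempty Ω] (φ : Ω → Equiv.Perm X) : J X * Q φ = J X := by
  ext x y
  simp only [Matrix.mul_apply, J]
  rw [← mul_sum, Q_col, mul_one]

lemma J_J [Nonempty X] : J X * J X = J X := by
  ext x y
  simp only [Matrix.mul_apply, J, sum_const, card_univ, nsmul_eq_mul]
  have hN : (Fintype.card X : ℝ) ≠ 0 := by simp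
  field_simp

lemma QJ_pow [Nonempty Ω] [Nonempty X] (φ : Ω → Equiv.Perm X) (m : ℕ) :
    (Q φ - J X) ^ (m + 1) = Q φ ^ (m + 1) - J X := by
  induction m with
  | zero => simp
  | succ m ih =>
    rw [pow_succ', ih, sub_mul, mul_sub, mul_sub, Q_pow_J, J_J, ← pow_succ', pow_succ' (Q φ) m,
      ← mul_assoc (J X), J_Q]
    have : J X * Q φ ^ m = J X := by
      clear ih
      induction m with
      | zero => simp
      | succ m ih => rw [pow_succ', ← mul_assoc, J_Q, ih]
    rw [this]
    abel

lemma sq_sub (A B : Matrix X X ℝ) : ∑ x, ∑ y, ((A * B) x y) ^ 2 ≤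
    (∑ x, ∑ y, (A x y) ^ 2) * (∑ x, ∑ y, (B x y) ^ 2) := by
  have h : ∀ x y, ((A * B) x y) ^ 2 ≤ (∑ z, (A x z) ^ 2) * (∑ z, (B z y) ^ 2) := by
    intro x y
    rw [Matrix.mul_apply]
    exact sum_mul_sq_le_sq_mul_sq _ _ _
  refine (sum_le_sum fun x _ => sum_le_sum fun y _ => h x y).trans (le_of_eq ?_)
  simp only [← mul_sum]
  rw [← sum_mul, sum_comm (f := fun x y => (B x y) ^ 2)]

lemma sq_pow (A : Matrix X X ℝ) (m : ℕ) : ∑ x, ∑ y, ((A ^ (m + 1)) x y) ^ 2 ≤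
    (∑ x, ∑ y, (A x y) ^ 2) ^ (m + 1) := by
  induction m with
  | zero => simp
  | succ m ih =>
    rw [pow_succ A, pow_succ (∑ x, ∑ y, (A x y) ^ 2)]
    refine (sq_sub _ _).trans ?_
    have : 0 ≤ ∑ x, ∑ y, (A x y) ^ 2 := sum_nonneg fun _ _ => sum_nonneg fun _ _ => sq_nonneg _
    gcongr

lemma Q_pos [Nonempty Ω] [Nonempty X] (φ : Ω → Equiv.Perm X) (m : ℕ) (x y : X)
    (h : (∑ x, ∑ y, (Q φ x y) ^ 2 - 1) ^ (m + 1) < (1 / (Fintype.card X : ℝ)) ^ 2) :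
    (Q φ ^ (m + 1)) x y ≠ 0 := by
  intro h0
  rw [← Q_var] at h
  have h1 := lt_of_le_of_lt (sq_pow (Q φ - J X) m) h
  rw [QJ_pow] at h1
  have h2 : ((Q φ ^ (m + 1) - J X) x y) ^ 2 ≤ ∑ x, ∑ y, ((Q φ ^ (m + 1) - J X) x y) ^ 2 := by
    refine le_trans ?_ (single_le_sum (f := fun x => ∑ y, ((Q φ ^ (m + 1) - J X) x y) ^ 2)
      (fun _ _ => sum_nonneg fun _ _ => sq_nonneg _) (mem_univ x))
    exact single_le_sum (f := fun y => ((Q φ ^ (m + 1) - J X) x y) ^ 2)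
      (fun _ _ => sq_nonneg _) (mem_univ y)
  rw [Matrix.sub_apply, h0, J, zero_sub, neg_sq] at h2
  linarith

lemma Q_path (φ : Ω → Equiv.Perm X) (m : ℕ) : ∀ (x y : X),
    (Q φ ^ m) x y ≠ 0 → ∃ l : List Ω, l.length = m ∧ l.foldl (fun s f => φ f s) x = y := by
  induction m with
  | zero =>
    intro x y h
    refine ⟨[], rfl, ?_⟩
    by_contra hne
    simp only [List.foldl_nil] at hne
    simp [hne] at h
  | succ m ih =>
    intro x y h
    rw [pow_succ', Matrix.mul_apply] at h
    obtain ⟨z, _, hz⟩ := exists_ne_zero_of_sum_ne_zero h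
    obtain ⟨l, hl, hl2⟩ := ih z y (right_ne_zero_of_mul hz)
    have h2 := left_ne_zero_of_mul hz
    have h3 : (∑ f, if φ f x = z then (1:ℝ) else 0) ≠ 0 := by
      intro h3; apply h2; simp [Q, h3]
    obtain ⟨f, _, hf⟩ := exists_ne_zero_of_sum_ne_zero h3
    have hf : φ f x = z := by
      by_contra hne; simp [hne] at hf
    exact ⟨f :: l, by simp [hl], by simp [hf, hl2]⟩
end mat
end RPT
namespace RPT
open Finset

/-- the property in the statement with an integer length bound -/
def Good {n d : ℕ} (r M : ℕ) (π : Fin d → Equiv.Perm (Fin n)) : Prop :=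
  ∀ x y : Fin r ↪ Fin n, ∃ l : List (Fin d), l.length = M ∧ ∀ i, wp π l (x i) = y i

def phi {n d : ℕ} (r K : ℕ) (π : Fin d → Equiv.Perm (Fin n)) (f : Fin K → Fin d) :
    Equiv.Perm (Fin r ↪ Fin n) :=
  Equiv.embeddingCongr (Equiv.refl _) (wp π (List.ofFn f))

lemma phi_apply {n d : ℕ} (r K : ℕ) (π : Fin d → Equiv.Perm (Fin n)) (f : Fin K → Fin d)
    (x : Fin r ↪ Fin n) (i : Fin r) : phi r K π f x i = wp π (List.ofFn f) (x i) := by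
  simp [phi]

lemma phi_path {n d : ℕ} (r K : ℕ) (π : Fin d → Equiv.Perm (Fin n)) (l : List (Fin K → Fin d)) :
    ∀ x : Fin r ↪ Fin n, ∃ l' : List (Fin d), l'.length = l.length * K ∧
      ∀ i, wp π l' (x i) = l.foldl (fun s f => phi r K π f s) x i := by
  induction l with
  | nil => intro x; exact ⟨[], by simp, by simp [wp]⟩
  | cons f l ih =>
    intro x
    obtain ⟨l', h1, h2⟩ := ih (phi r K π f x)
    refine ⟨List.ofFn f ++ l', ?_, ?_⟩
    · simp [h1]; ring
    · intro i
      rw [wp_append, Equiv.Perm.mul_apply, List.foldl_cons, ← h2, phi_apply]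

open Classical in
lemma good_of {n d r K : ℕ} (hr : 1 ≤ r) (hrn : r ≤ n) (hd : 1 ≤ d)
    (π : Fin d → Equiv.Perm (Fin n))
    (h : ∑ x, ∑ y, (Q (phi r K π) x y) ^ 2 - 1 < 1 / √(n:ℝ)) : Good r (4 * r * K) π := by
  have : Nonempty (Fin r ↪ Fin n) := ⟨Fin.castLEEmb hrn⟩
  have : Nonempty (Fin d) := ⟨⟨0, hd⟩⟩
  have hn0 : (0:ℝ) < n := by exact_mod_cast (by omega : 0 < n)
  intro x y
  have hD0 : 0 ≤ ∑ x, ∑ y, (Q (phi r K π) x y) ^ 2 - 1 := by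
    rw [← Q_var]
    exact sum_nonneg fun _ _ => sum_nonneg fun _ _ => sq_nonneg _
  have hN : (Fintype.card (Fin r ↪ Fin n) : ℝ) ≤ (n:ℝ) ^ r := by
    rw [Fintype.card_embedding_eq, Fintype.card_fin, Fintype.card_fin]
    exact_mod_cast Nat.descFactorial_le_pow n r
  have hN0 : (0:ℝ) < Fintype.card (Fin r ↪ Fin n) := by exact_mod_cast Fintype.card_pos
  have h1 : (∑ x, ∑ y, (Q (phi r K π) x y) ^ 2 - 1) ^ (4 * r - 1 + 1) <
      (1 / (Fintype.card (Fin r ↪ Fin n) : ℝ)) ^ 2 := by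
    calc _ < (1 / √(n:ℝ)) ^ (4 * r - 1 + 1) := pow_lt_pow_left₀ h hD0 (by omega)
      _ = (1 / (n:ℝ) ^ r) ^ 2 := by
        rw [show 4 * r - 1 + 1 = 2 * (r * 2) by omega, pow_mul, div_pow, Real.sq_sqrt hn0.le,
          one_pow, pow_mul, div_pow, one_pow]
      _ ≤ _ := by gcongr
  obtain ⟨l, hl, hl2⟩ := Q_path _ _ x y (Q_pos (phi r K π) (4 * r - 1) x y h1)
  obtain ⟨l', h3, h4⟩ := phi_path r K π l x
  refine ⟨l', ?_, ?_⟩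
  · rw [h3, hl, show 4 * r - 1 + 1 = 4 * r by omega]
  · intro i; rw [h4, hl2]

open Classical in
lemma bad_bound {n d r K : ℕ} (hr : 1 ≤ r) (hd : 1 ≤ d)
    (hn : 4 * (2 * r * (K + 1)) ^ 2 ≤ n) (hK : n ^ (r + 1) ≤ d ^ K) :
    ((univ.filter (fun π : Fin d → Equiv.Perm (Fin n) => ¬ Good r (4 * r * K) π)).card : ℝ) ≤
      √n * (1 / n + 3 * (4 * (2 * r * (K + 1)) ^ 2) ^ (r + 1) / n) *
      Fintype.card (Fin d → Equiv.Perm (Fin n)) := by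
  set T := Fintype.card (Fin d → Equiv.Perm (Fin n)) with hT
  set ε : ℝ := 3 * (4 * (2 * r * (K + 1)) ^ 2) ^ (r + 1) / n with hε
  have hrn : r ≤ n := by
    have : r ≤ 2 * r * (K + 1) := by nlinarith
    nlinarith
  have hn0 : (0:ℝ) < n := by exact_mod_cast (by omega : 0 < n)
  have : Nonempty (Fin r ↪ Fin n) := ⟨Fin.castLEEmb hrn⟩
  have : Nonempty (Fin d) := ⟨⟨0, hd⟩⟩
  have hN : (Fintype.card (Fin r ↪ Fin n) : ℝ) ≤ (n:ℝ) ^ r := by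
    rw [Fintype.card_embedding_eq, Fintype.card_fin, Fintype.card_fin]
    exact_mod_cast Nat.descFactorial_le_pow n r
  set W : ℝ := (Fintype.card (Fin K → Fin d) : ℝ) with hW
  have hWK : (n:ℝ) ^ (r + 1) ≤ W := by
    rw [hW, Fintype.card_fun, Fintype.card_fin, Fintype.card_fin]
    exact_mod_cast hK
  have hW0 : 0 < W := lt_of_lt_of_le (by positivity) hWK
  have hpair : ∀ f g : Fin K → Fin d, ∑ π : Fin d → Equiv.Perm (Fin n),
      ((univ.filter (fun x : Fin r ↪ Fin n => phi r K π f x = phi r K π g x)).card : ℝ) ≤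
      (1 + ε) * T + (if f = g then (n:ℝ) ^ r * T else 0) := by
    intro f g
    split_ifs with hfg
    · subst hfg
      simp only [filter_true, card_univ, sum_const, nsmul_eq_mul]
      have : 0 ≤ (1 + ε) * T := by positivity
      rw [← hT]
      have h2 : (T:ℝ) * (Fintype.card (Fin r ↪ Fin n)) ≤ T * (n:ℝ) ^ r := by gcongr
      linarith
    · rw [add_zero]
      refine le_trans (le_of_eq ?_) (word_bound hr hn K le_rfl (List.ofFn f) (List.ofFn g)
        (by simp) (by simp) (fun h => hfg (List.ofFn_injective h)))
      apply sum_congr rfl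
      intro π _
      refine congrArg _ (congrArg card (filter_congr fun x _ => ?_))
      rw [DFunLike.ext_iff]
      simp only [phi_apply]
  have hE : ∑ π : Fin d → Equiv.Perm (Fin n), ∑ x, ∑ y, (Q (phi r K π) x y) ^ 2 ≤
      (1 / n + (1 + ε)) * T := by
    simp only [Q_sq]
    rw [← sum_div, div_le_iff₀ (by positivity)]
    have e : ∑ π : Fin d → Equiv.Perm (Fin n), ∑ f, ∑ g,
        ((univ.filter (fun x : Fin r ↪ Fin n => phi r K π f x = phi r K π g x)).card : ℝ) =
        ∑ f, ∑ g, ∑ π : Fin d → Equiv.Perm (Fin n),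
        ((univ.filter (fun x : Fin r ↪ Fin n => phi r K π f x = phi r K π g x)).card : ℝ) := by
      rw [sum_comm]
      apply sum_congr rfl
      intro f _
      rw [sum_comm]
    rw [e]
    refine (sum_le_sum fun f _ => sum_le_sum fun g _ => hpair f g).trans ?_
    simp only [sum_add_distrib, sum_const, card_univ, nsmul_eq_mul, sum_ite_eq, mem_univ, if_true]
    rw [← hW]
    have h5 : W * ((n:ℝ) ^ r * T) ≤ 1 / n * T * W ^ 2 := by
      have h6 : (n:ℝ) ^ r ≤ 1 / n * W := by
        rw [one_div, inv_mul_eq_div, le_div_iff₀ hn0, ← pow_succ]; exact hWK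
      calc W * ((n:ℝ) ^ r * T) ≤ W * ((1 / n * W) * T) := by gcongr
        _ = _ := by ring
    nlinarith
  have hs0 : 0 < √(n:ℝ) := Real.sqrt_pos.2 hn0
  have hmk : ((univ.filter (fun π : Fin d → Equiv.Perm (Fin n) => ¬ Good r (4 * r * K) π)).card : ℝ)
      * (1 / √(n:ℝ)) ≤ ∑ π : Fin d → Equiv.Perm (Fin n),
        (∑ x, ∑ y, (Q (phi r K π) x y) ^ 2 - 1) := by
    rw [← nsmul_eq_mul]
    refine (card_nsmul_le_sum _ (fun π : Fin d → Equiv.Perm (Fin n) =>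
        (∑ x, ∑ y, (Q (phi r K π) x y) ^ 2 - 1)) _ ?_).trans ?_
    · intro π hπ
      by_contra hlt
      exact (mem_filter.1 hπ).2 (good_of hr hrn hd π (not_le.1 hlt))
    · apply sum_le_sum_of_subset_of_nonneg (subset_univ _)
      intro π _ _
      rw [← Q_var]
      exact sum_nonneg fun _ _ => sum_nonneg fun _ _ => sq_nonneg _
  rw [sum_sub_distrib, sum_const, card_univ, nsmul_eq_mul, mul_one, ← hT] at hmk
  rw [mul_one_div, div_le_iff₀ hs0] at hmk
  refine hmk.trans ?_
  calc _ ≤ ((1 / n + (1 + ε)) * T - T) * √n := by gcongr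
    _ = _ := by ring

lemma log_pow_sqrt (p : ℕ) :
    Filter.Tendsto (fun n : ℕ => Real.log n ^ p / √(n:ℝ)) Filter.atTop (nhds 0) := by
  have h1 := (Real.isLittleO_pow_log_id_atTop (n := p)).tendsto_div_nhds_zero
  have h2 := (h1.comp (Real.tendsto_sqrt_atTop.comp tendsto_natCast_atTop_atTop)).const_mul
    ((2:ℝ) ^ p)
  rw [mul_zero] at h2
  refine h2.congr ?_
  intro n
  simp only [Function.comp, id]
  rw [Real.log_sqrt (by positivity), div_pow]
  field_simp

lemma asymp (r : ℕ) :
    (∀ᶠ n : ℕ in Filter.atTop, ((r + 1) * (Nat.log 2 n + 1) : ℕ) ≤ 3 * (r + 1) * Real.log n) ∧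
    (∀ᶠ n : ℕ in Filter.atTop, 4 * (2 * r * ((r + 1) * (Nat.log 2 n + 1) + 1)) ^ 2 ≤ n) ∧
    Filter.Tendsto (fun n : ℕ => √(n:ℝ) * (1 / n + 3 * (4 * (2 * r *
      (((r + 1) * (Nat.log 2 n + 1) : ℕ) + 1)) ^ 2) ^ (r + 1) / n)) Filter.atTop (nhds 0) := by
  have hlog : ∀ᶠ n : ℕ in Filter.atTop, 1 ≤ Real.log n :=
    (Real.tendsto_log_atTop.comp tendsto_natCast_atTop_atTop).eventually_ge_atTop 1
  have hn1 : ∀ᶠ n : ℕ in Filter.atTop, 1 ≤ n := Filter.eventually_ge_atTop 1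
  have key : ∀ᶠ n : ℕ in Filter.atTop,
      ((r + 1) * (Nat.log 2 n + 1) : ℕ) ≤ 3 * (r + 1) * Real.log n := by
    filter_upwards [hlog, hn1] with n h1 h2
    have h3 : ((Nat.log 2 n : ℕ) : ℝ) * Real.log 2 ≤ Real.log n := by
      rw [← Real.log_pow]
      apply Real.log_le_log (by positivity)
      exact_mod_cast Nat.pow_log_le_self 2 (by omega)
    have h4 := Real.log_two_gt_d9
    have h5 : ((Nat.log 2 n : ℕ) : ℝ) ≤ 2 * Real.log n := by
      have : (0:ℝ) ≤ (Nat.log 2 n : ℕ) := by positivity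
      nlinarith
    push_cast
    have : (0:ℝ) ≤ r := by positivity
    nlinarith
  obtain ⟨A, hA⟩ : ∃ A : ℝ, A = 4 * (2 * r * (3 * (r + 1) + 1)) ^ 2 := ⟨_, rfl⟩
  have hA0 : 0 ≤ A := by rw [hA]; positivity
  have hΛ : ∀ᶠ n : ℕ in Filter.atTop, 4 * (2 * r *
      (((r + 1) * (Nat.log 2 n + 1) : ℕ) + 1) : ℝ) ^ 2 ≤ A * Real.log n ^ 2 := by
    filter_upwards [hlog, key] with n h1 h2
    calc 4 * (2 * r * (((r + 1) * (Nat.log 2 n + 1) : ℕ) + 1) : ℝ) ^ 2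
        ≤ 4 * (2 * r * ((3 * (r + 1) + 1) * Real.log n) : ℝ) ^ 2 := by
          gcongr
          linarith
      _ = _ := by rw [hA]; ring
  refine ⟨key, ?_, ?_⟩
  · have h1 := (log_pow_sqrt 2).const_mul A
    rw [mul_zero] at h1
    filter_upwards [hΛ, h1.eventually_lt_const one_pos, hn1] with n h2 h3 h4
    have hn : (1:ℝ) ≤ n := by exact_mod_cast h4
    have hs : 1 ≤ √(n:ℝ) := Real.one_le_sqrt.2 hn
    rw [← mul_div_assoc, div_lt_one (by positivity)] at h3
    have h5 : √(n:ℝ) ≤ n := by nlinarith [Real.sq_sqrt (by positivity : (0:ℝ) ≤ n)]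
    have h6 := h2.trans (h3.le.trans h5)
    exact_mod_cast h6
  · have h1 := ((log_pow_sqrt 0).add ((log_pow_sqrt (2 * (r + 1))).const_mul (3 * A ^ (r + 1))))
    rw [mul_zero, add_zero] at h1
    refine squeeze_zero' (Filter.Eventually.of_forall fun n => by positivity) ?_ h1
    filter_upwards [hΛ, hn1] with n h2 h4
    have hn : (1:ℝ) ≤ n := by exact_mod_cast h4
    have hs : 1 ≤ √(n:ℝ) := Real.one_le_sqrt.2 hn
    calc _ ≤ √(n:ℝ) * (1 / n + 3 * (A * Real.log n ^ 2) ^ (r + 1) / n) := by gcongr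
      _ = √(n:ℝ) / n * (1 + 3 * (A * Real.log n ^ 2) ^ (r + 1)) := by ring
      _ = _ := by
        rw [Real.sqrt_div_self', mul_pow, ← pow_mul]
        ring
end RPT
/-- For every `r ≥ 1` and `d ≥ 2` there is a constant `C > 0` such that, for `d`
independent uniformly random permutations `π 0, …, π (d-1)` of `Fin n` (i.e. `π`
uniform on `Fin d → Equiv.Perm (Fin n)`), the following holds with probability
tending to `1` as `n → ∞`: for any two `r`-tuples of pairwise distinct elements of
`Fin n`, there is a sequence of at most `C * log n` of the given permutations whose
composition maps the first tuple to the second, coordinatewise. -/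
theorem random_permutations_transitive_on_tuples :
    ∀ r d : ℕ, 1 ≤ r → 2 ≤ d →
      ∃ C : ℝ, 0 < C ∧
        Filter.Tendsto
          (fun n : ℕ =>
            (Nat.card {π : Fin d → Equiv.Perm (Fin n) //
                ∀ x y : Fin r → Fin n, Function.Injective x → Function.Injective y →
                  ∃ w : List (Equiv.Perm (Fin n)),
                    (∀ σ ∈ w, ∃ j : Fin d, σ = π j) ∧
                    (w.length : ℝ) ≤ C * Real.log n ∧
                    ∀ i : Fin r, permWordAction w (x i) = y i} : ℝ) /
            (Nat.card (Fin d → Equiv.Perm (Fin n)) : ℝ))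
          Filter.atTop (nhds 1) := by
  classical
  intro r d hr hd
  refine ⟨4 * r * (3 * (r + 1)), by positivity, ?_⟩
  obtain ⟨a1, a2, a3⟩ := RPT.asymp r
  have lo := a3.const_sub 1
  rw [sub_zero] at lo
  refine tendsto_of_tendsto_of_tendsto_of_le_of_le' lo tendsto_const_nhds ?_ ?_
  · filter_upwards [a1, a2] with n h1 h2
    obtain ⟨K, hK⟩ : ∃ K, K = (r + 1) * (Nat.log 2 n + 1) := ⟨_, rfl⟩
    rw [← hK] at h1 h2 ⊢
    have hnK : n ^ (r + 1) ≤ d ^ K := by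
      calc n ^ (r + 1) ≤ (2 ^ (Nat.log 2 n + 1)) ^ (r + 1) :=
            Nat.pow_le_pow_left (Nat.lt_pow_succ_log_self (by norm_num) n).le _
        _ = 2 ^ K := by rw [← pow_mul, hK, mul_comm]
        _ ≤ d ^ K := Nat.pow_le_pow_left hd _
    have hb := RPT.bad_bound (n := n) (d := d) (r := r) (K := K) hr (by omega) h2 hnK
    have hT : (0:ℝ) < Fintype.card (Fin d → Equiv.Perm (Fin n)) := by
      exact_mod_cast Fintype.card_pos
    rw [Nat.card_eq_fintype_card, le_div_iff₀ (by rw [Nat.card_eq_fintype_card]; exact hT),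
      Nat.card_eq_fintype_card, Fintype.card_subtype]
    have hsplit := Finset.card_filter_add_card_filter_not (s := Finset.univ)
      (fun π : Fin d → Equiv.Perm (Fin n) => RPT.Good r (4 * r * K) π)
    have hsplit' : ((Finset.univ.filter
        (fun π : Fin d → Equiv.Perm (Fin n) => RPT.Good r (4 * r * K) π)).card : ℝ) +
        ((Finset.univ.filter
        (fun π : Fin d → Equiv.Perm (Fin n) => ¬ RPT.Good r (4 * r * K) π)).card : ℝ) =
        Fintype.card (Fin d → Equiv.Perm (Fin n)) := by
      rw [← Finset.card_univ]
      exact_mod_cast hsplit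
    have hle : (1 - √(n:ℝ) * (1 / n + 3 * (4 * (2 * r * ((K : ℝ) + 1)) ^ 2) ^ (r + 1) / n)) *
        Fintype.card (Fin d → Equiv.Perm (Fin n)) ≤ ((Finset.univ.filter
        (fun π : Fin d → Equiv.Perm (Fin n) => RPT.Good r (4 * r * K) π)).card : ℝ) := by
      rw [sub_mul, one_mul]
      linarith
    refine hle.trans (Nat.cast_le.2 (Finset.card_le_card ?_))
    intro π hπ
    have hπ := (Finset.mem_filter.1 hπ).2
    refine Finset.mem_filter.2 ⟨Finset.mem_univ _, ?_⟩
    intro x y hx hy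
    obtain ⟨l, hl, hl2⟩ := hπ ⟨x, hx⟩ ⟨y, hy⟩
    refine ⟨l.map π, ?_, ?_, ?_⟩
    · intro σ hσ
      obtain ⟨j, _, rfl⟩ := List.mem_map.1 hσ
      exact ⟨j, rfl⟩
    · rw [List.length_map, hl]
      push_cast
      have : (0:ℝ) ≤ r := by positivity
      nlinarith
    · intro i
      rw [RPT.wp_action]
      exact hl2 i
  · refine Filter.Eventually.of_forall fun n => ?_
    apply div_le_one_of_le₀ _ (by positivity)
    exact_mod_cast Nat.card_le_card_of_injective _ Subtype.val_injective
end
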